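/- arXiv:2503.20329 — 4 statements merged into one kernel-verified Lean document; each statement's English description precedes it below -/
import Mathlib

section
/- Let G be a connected finite simple graph and let A be a minimal edge cut of G with |A| = 1 (i.e., the unique edge of A is a bridge). Let G_1 and G_2 be the two connected components of G − A. Then y_G = y_{G_1} + y_{G_2}. -/
open SimpleGraph

/-- The number of connected components of a graph. -/
noncomputable def numComp {V : Type*} (G : SimpleGraph V) : ℕ :=
  Nat.card G.ConnectedComponent

/-- `y_G(A) = 2 c(G - A) - |A| - 1`. -/
noncomputable def yVal {V : Type*} (G : SimpleGraph V) (A : Set (Sym2 V)) : ℤ :=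
  2 * (numComp (G.deleteEdges A) : ℤ) - (A.ncard : ℤ) - 1

/-- `y_G = max_{A ⊆ E(G)} y_G(A)`. -/
noncomputable def yMax {V : Type*} (G : SimpleGraph V) : ℤ :=
  sSup { y : ℤ | ∃ A ⊆ G.edgeSet, yVal G A = y }

/-!
Let `e` be the only edge of `G` between the two sides `s` and `t` of a vertex partition. Deleting
the bridge `e` in addition to `A` costs one edge and gains one component, so `y_G(A)` does not drop
and `y_G` is attained at some `A` containing `e`. Such an `A` consists of `e`, a set `A₁` of edges
within `s` and a set `A₂` of edges within `t`, chosen independently of each other. The components of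
`G - A` are those of `G[s] - A₁` together with those of `G[t] - A₂`, whence
`y_G(A) = y_{G[s]}(A₁) + y_{G[t]}(A₂)`, the edge `e` making up for the second summand `-1`.
-/

section Components

variable {V W : Type*} (G : SimpleGraph V) (H : SimpleGraph W)

variable {G} in
theorem eq_of_reachable_of_forall_adj {α : Type*} {f : V → α}
    (hf : ∀ v w, G.Adj v w → f v = f w) {v w : V} (hvw : G.Reachable v w) : f v = f w := by
  obtain ⟨p⟩ := hvw
  induction p with
  | nil => rfl
  | cons hadj _ ih => exact (hf _ _ hadj).trans ih

/-- The components of a disjoint sum of graphs are the components of the two summands. -/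
def connectedComponentSumEquiv :
    G.ConnectedComponent ⊕ H.ConnectedComponent ≃ (G ⊕g H).ConnectedComponent where
  toFun := Sum.elim (ConnectedComponent.map Embedding.sumInl.toHom)
    (ConnectedComponent.map Embedding.sumInr.toHom)
  invFun := ConnectedComponent.lift (Sum.map G.connectedComponentMk H.connectedComponentMk)
    fun _ _ p _ ↦ eq_of_reachable_of_forall_adj (by
      rintro (v | v) (w | w) hadj
      · exact congrArg Sum.inl (ConnectedComponent.sound (Adj.reachable hadj))
      · simp at hadj
      · simp at hadj
      · exact congrArg Sum.inr (ConnectedComponent.sound (Adj.reachable hadj))) p.reachable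
  left_inv := by rintro (⟨⟨v⟩⟩ | ⟨⟨w⟩⟩) <;> rfl
  right_inv := by rintro ⟨v | w⟩ <;> rfl

theorem numComp_sum [Finite V] [Finite W] : numComp (G ⊕g H) = numComp G + numComp H := by
  rw [numComp, ← Nat.card_congr (connectedComponentSumEquiv G H), Nat.card_sum, numComp, numComp]

variable {G H}

theorem numComp_congr (φ : G ≃g H) : numComp G = numComp H :=
  Nat.card_congr φ.connectedComponentEquiv

theorem numComp_lt_numComp_deleteEdges_of_isBridge [Finite V] {e : Sym2 V} (he : e ∈ G.edgeSet)
    (hbridge : G.IsBridge e) : numComp G < numComp (G.deleteEdges {e}) := by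
  induction e with | _ u v
  have hle : G.deleteEdges {s(u, v)} ≤ G := deleteEdges_le _
  have hsurj := ConnectedComponent.surjective_map_ofLE hle
  refine (ConnectedComponent.card_le_card_of_le hle).lt_of_ne fun hcard ↦ hbridge ?_
  have hbij := (Nat.bijective_iff_surjective_and_card _).2 ⟨hsurj, hcard.symm⟩
  exact ConnectedComponent.exact (hbij.injective (ConnectedComponent.sound (Adj.reachable he)))

end Components

section Cut

variable {V : Type*} {G : SimpleGraph V} {s t : Set V}

theorem not_reachable_of_between_eq_bot (hst : IsCompl s t) (hcut : G.between s t = ⊥) {u v : V}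
    (hu : u ∈ s) (hv : v ∈ t) : ¬ G.Reachable u v := by
  have hside : ∀ a b, G.Adj a b → (a ∈ s) = (b ∈ s) := by
    intro a b hab
    have hnot : ¬ (G.between s t).Adj a b := by simp [hcut]
    rw [between_adj, ← hst.compl_eq] at hnot
    grind
  intro huv
  have hvs : v ∈ s := eq_of_reachable_of_forall_adj hside huv ▸ hu
  exact hst.disjoint.notMem_of_mem_left hvs hv

theorem between_deleteEdges_eq_bot {B : Set (Sym2 V)} (hB : (G.between s t).edgeSet ⊆ B) :
    (G.deleteEdges B).between s t = ⊥ := by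
  ext a b
  simp only [between_adj, deleteEdges_adj, bot_adj, iff_false]
  exact fun ⟨⟨hab, hnot⟩, hside⟩ ↦ hnot (hB ⟨hab, hside⟩)

theorem isBridge_of_edgeSet_between_eq_singleton (hst : IsCompl s t) {e : Sym2 V}
    (he : (G.between s t).edgeSet = {e}) : G.IsBridge e := by
  induction e with | _ u v
  have hcut : (G.deleteEdges {s(u, v)}).between s t = ⊥ := between_deleteEdges_eq_bot he.subset
  have huv : s(u, v) ∈ (G.between s t).edgeSet := he ▸ Set.mem_singleton _
  obtain ⟨hu, hv⟩ | ⟨hu, hv⟩ := huv.2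
  · exact not_reachable_of_between_eq_bot hst hcut hu hv
  · exact fun h ↦ not_reachable_of_between_eq_bot hst hcut hv hu h.symm

/-- A graph without edges across a vertex partition is the disjoint sum of its two sides. -/
noncomputable def induceSumInduceIso (hst : IsCompl s t) (hcut : G.between s t = ⊥) :
    G.induce s ⊕g G.induce t ≃g G where
  toEquiv := Equiv.ofBijective (Sum.elim Subtype.val Subtype.val) (by
    classical
    obtain rfl := hst.compl_eq
    exact (Equiv.Set.sumCompl s).bijective)
  map_rel_iff' := by
    have hnot : ∀ a b, ¬ (G.between s t).Adj a b := by simp [hcut]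
    rintro (⟨a, ha⟩ | ⟨a, ha⟩) (⟨b, hb⟩ | ⟨b, hb⟩)
    · rfl
    · exact ⟨fun hab ↦ (hnot a b ⟨hab, .inl ⟨ha, hb⟩⟩).elim, fun hab ↦ by simp at hab⟩
    · exact ⟨fun hab ↦ (hnot a b ⟨hab, .inr ⟨ha, hb⟩⟩).elim, fun hab ↦ by simp at hab⟩
    · rfl

theorem numComp_eq_add_of_between_eq_bot [Finite V] (hst : IsCompl s t)
    (hcut : G.between s t = ⊥) : numComp G = numComp (G.induce s) + numComp (G.induce t) := by
  rw [← numComp_congr (induceSumInduceIso hst hcut), numComp_sum]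

end Cut

section Gluing

variable {V : Type*} {G : SimpleGraph V} {s t : Set V}

/-- The pairs in `B` both of whose entries lie in `s`, as pairs of elements of the subtype `s`. -/
def restrictEdges (s : Set V) (B : Set (Sym2 V)) : Set (Sym2 s) :=
  Sym2.map Subtype.val ⁻¹' B

theorem induce_deleteEdges (B : Set (Sym2 V)) :
    (G.deleteEdges B).induce s = (G.induce s).deleteEdges (restrictEdges s B) := by
  ext a b
  simp only [comap_adj, deleteEdges_adj]
  rfl

theorem restrictEdges_union (B C : Set (Sym2 V)) :
    restrictEdges s (B ∪ C) = restrictEdges s B ∪ restrictEdges s C :=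
  Set.preimage_union

theorem restrictEdges_subset_edgeSet {B : Set (Sym2 V)} (hB : B ⊆ G.edgeSet) :
    restrictEdges s B ⊆ (G.induce s).edgeSet :=
  fun _ hx ↦ (Embedding.induce s).map_mem_edgeSet_iff.1 (hB hx)

theorem restrictEdges_edgeSet_between (hst : Disjoint s t) :
    restrictEdges s (G.between s t).edgeSet = ∅ := by
  refine Set.eq_empty_of_forall_notMem fun x ↦ ?_
  induction x with | _ a b
  rintro ⟨-, ⟨-, hb⟩ | ⟨ha, -⟩⟩
  · exact hst.notMem_of_mem_left b.2 hb
  · exact hst.notMem_of_mem_left a.2 ha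

theorem induce_deleteEdges_edgeSet_between_left (hst : Disjoint s t) :
    (G.deleteEdges (G.between s t).edgeSet).induce s = G.induce s := by
  rw [induce_deleteEdges, restrictEdges_edgeSet_between hst, deleteEdges_empty]

theorem induce_deleteEdges_edgeSet_between_right (hst : Disjoint s t) :
    (G.deleteEdges (G.between s t).edgeSet).induce t = G.induce t := by
  rw [between_comm, induce_deleteEdges_edgeSet_between_left hst.symm]

theorem restrictEdges_image_self (A : Set (Sym2 s)) :
    restrictEdges s (Sym2.map Subtype.val '' A) = A :=
  Set.preimage_image_eq A (Sym2.map.injective Subtype.val_injective)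

theorem restrictEdges_image_of_disjoint (hst : Disjoint s t) (A : Set (Sym2 t)) :
    restrictEdges s (Sym2.map Subtype.val '' A) = ∅ := by
  refine Set.eq_empty_of_forall_notMem fun x ↦ ?_
  rintro ⟨y, -, hyx⟩
  induction y with | _ a b
  have ha : a.1 ∈ x.map Subtype.val := hyx ▸ Sym2.mem_mk_left _ _
  obtain ⟨c, -, hca⟩ := Sym2.mem_map.1 ha
  exact hst.notMem_of_mem_left c.2 (hca ▸ a.2)

theorem disjoint_image_of_restrictEdges_eq_empty {B : Set (Sym2 V)} (hB : restrictEdges s B = ∅)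
    (A : Set (Sym2 s)) : Disjoint B (Sym2.map Subtype.val '' A) := by
  rw [Set.disjoint_left]
  rintro _ hx ⟨y, -, rfl⟩
  exact Set.eq_empty_iff_forall_notMem.1 hB y hx

/-- The edge set obtained from edge sets `A₁` and `A₂` on the two sides `s` and `t` of a cut by
adding all edges of the cut. -/
def glueEdges (G : SimpleGraph V) (s t : Set V) (A₁ : Set (Sym2 s)) (A₂ : Set (Sym2 t)) :
    Set (Sym2 V) :=
  (G.between s t).edgeSet ∪ (Sym2.map Subtype.val '' A₁ ∪ Sym2.map Subtype.val '' A₂)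

theorem glueEdges_comm (A₁ : Set (Sym2 s)) (A₂ : Set (Sym2 t)) :
    glueEdges G s t A₁ A₂ = glueEdges G t s A₂ A₁ := by
  rw [glueEdges, glueEdges, between_comm, Set.union_comm (_ '' A₁)]

theorem restrictEdges_glueEdges_left (hst : Disjoint s t) (A₁ : Set (Sym2 s))
    (A₂ : Set (Sym2 t)) : restrictEdges s (glueEdges G s t A₁ A₂) = A₁ := by
  rw [glueEdges, restrictEdges_union, restrictEdges_union, restrictEdges_edgeSet_between hst,
    restrictEdges_image_self, restrictEdges_image_of_disjoint hst, Set.union_empty, Set.empty_union]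

theorem restrictEdges_glueEdges_right (hst : Disjoint s t) (A₁ : Set (Sym2 s))
    (A₂ : Set (Sym2 t)) : restrictEdges t (glueEdges G s t A₁ A₂) = A₂ := by
  rw [glueEdges_comm, restrictEdges_glueEdges_left hst.symm]

theorem glueEdges_subset_edgeSet {A₁ : Set (Sym2 s)} {A₂ : Set (Sym2 t)}
    (hA₁ : A₁ ⊆ (G.induce s).edgeSet) (hA₂ : A₂ ⊆ (G.induce t).edgeSet) :
    glueEdges G s t A₁ A₂ ⊆ G.edgeSet := by
  refine Set.union_subset (edgeSet_mono between_le) (Set.union_subset ?_ ?_)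
  · exact Set.image_subset_iff.2 fun _ hx ↦ (Embedding.induce s).map_mem_edgeSet_iff.2 (hA₁ hx)
  · exact Set.image_subset_iff.2 fun _ hx ↦ (Embedding.induce t).map_mem_edgeSet_iff.2 (hA₂ hx)

theorem glueEdges_restrictEdges (hst : Codisjoint s t) {B : Set (Sym2 V)} (hB : B ⊆ G.edgeSet)
    (hcut : (G.between s t).edgeSet ⊆ B) :
    glueEdges G s t (restrictEdges s B) (restrictEdges t B) = B := by
  refine (Set.union_subset hcut (Set.union_subset (Set.image_preimage_subset _ _)
    (Set.image_preimage_subset _ _))).antisymm fun x hx ↦ ?_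
  induction x with | _ a b
  have hmem : ∀ v, v ∈ s ∨ v ∈ t := fun v ↦ hst.top_le (Set.mem_univ v)
  obtain ha | ha := hmem a <;> obtain hb | hb := hmem b
  · exact .inr (.inl ⟨s(⟨a, ha⟩, ⟨b, hb⟩), hx, rfl⟩)
  · exact .inl ⟨hB hx, .inl ⟨ha, hb⟩⟩
  · exact .inl ⟨hB hx, .inr ⟨ha, hb⟩⟩
  · exact .inr (.inr ⟨s(⟨a, ha⟩, ⟨b, hb⟩), hx, rfl⟩)

theorem ncard_glueEdges [Finite V] (hst : Disjoint s t) (A₁ : Set (Sym2 s)) (A₂ : Set (Sym2 t)) :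
    (glueEdges G s t A₁ A₂).ncard = (G.between s t).edgeSet.ncard + (A₁.ncard + A₂.ncard) := by
  have hcut₁ := disjoint_image_of_restrictEdges_eq_empty
    (restrictEdges_edgeSet_between (G := G) hst) A₁
  have hcut₂ := disjoint_image_of_restrictEdges_eq_empty
    (restrictEdges_edgeSet_between (G := G) hst.symm) A₂
  rw [between_comm] at hcut₂
  have hsides := disjoint_image_of_restrictEdges_eq_empty
    (restrictEdges_image_of_disjoint hst.symm A₁) A₂
  rw [glueEdges, Set.ncard_union_eq (hcut₁.union_right hcut₂), Set.ncard_union_eq hsides,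
    Set.ncard_image_of_injective _ (Sym2.map.injective Subtype.val_injective),
    Set.ncard_image_of_injective _ (Sym2.map.injective Subtype.val_injective)]

theorem numComp_deleteEdges_glueEdges [Finite V] (hst : IsCompl s t) (A₁ : Set (Sym2 s))
    (A₂ : Set (Sym2 t)) :
    numComp (G.deleteEdges (glueEdges G s t A₁ A₂)) =
      numComp ((G.induce s).deleteEdges A₁) + numComp ((G.induce t).deleteEdges A₂) := by
  have hcut : (G.deleteEdges (glueEdges G s t A₁ A₂)).between s t = ⊥ :=
    between_deleteEdges_eq_bot Set.subset_union_left
  rw [numComp_eq_add_of_between_eq_bot hst hcut, induce_deleteEdges, induce_deleteEdges,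
    restrictEdges_glueEdges_left hst.disjoint, restrictEdges_glueEdges_right hst.disjoint]

end Gluing

section YMax

variable {V : Type*} [Finite V] {G : SimpleGraph V} {s t : Set V}

theorem yVal_le_yMax {A : Set (Sym2 V)} (hA : A ⊆ G.edgeSet) : yVal G A ≤ yMax G :=
  le_csSup ((𝒫 G.edgeSet).toFinite.image (yVal G)).bddAbove ⟨A, hA, rfl⟩

variable (G) in
theorem exists_yVal_eq_yMax : ∃ A ⊆ G.edgeSet, yVal G A = yMax G :=
  (Set.powerset_nonempty.image (yVal G)).csSup_mem ((𝒫 G.edgeSet).toFinite.image (yVal G))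

theorem yVal_le_yVal_insert_of_isBridge {e : Sym2 V} (he : e ∈ G.edgeSet) (hbridge : G.IsBridge e)
    (A : Set (Sym2 V)) : yVal G A ≤ yVal G (insert e A) := by
  by_cases heA : e ∈ A
  · rw [Set.insert_eq_of_mem heA]
  have hlt : numComp (G.deleteEdges A) < numComp (G.deleteEdges (insert e A)) := by
    rw [Set.insert_eq, Set.union_comm, ← deleteEdges_deleteEdges]
    refine numComp_lt_numComp_deleteEdges_of_isBridge ?_ (hbridge.anti (deleteEdges_le A))
    rw [edgeSet_deleteEdges]
    exact ⟨he, heA⟩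
  rw [yVal, yVal, Set.ncard_insert_of_notMem heA]
  omega

theorem yVal_glueEdges (hst : IsCompl s t) (A₁ : Set (Sym2 s)) (A₂ : Set (Sym2 t)) :
    yVal G (glueEdges G s t A₁ A₂) =
      yVal (G.induce s) A₁ + yVal (G.induce t) A₂ + 1 - (G.between s t).edgeSet.ncard := by
  simp only [yVal, numComp_deleteEdges_glueEdges hst, ncard_glueEdges hst.disjoint]
  push_cast
  ring

theorem add_yMax_induce_le (hst : IsCompl s t) :
    yMax (G.induce s) + yMax (G.induce t) + 1 - (G.between s t).edgeSet.ncard ≤ yMax G := by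
  obtain ⟨A₁, hA₁, hmax₁⟩ := exists_yVal_eq_yMax (G.induce s)
  obtain ⟨A₂, hA₂, hmax₂⟩ := exists_yVal_eq_yMax (G.induce t)
  rw [← hmax₁, ← hmax₂, ← yVal_glueEdges hst]
  exact yVal_le_yMax (glueEdges_subset_edgeSet hA₁ hA₂)

theorem yVal_le_add_yMax_induce (hst : IsCompl s t) {A : Set (Sym2 V)} (hA : A ⊆ G.edgeSet)
    (hcut : (G.between s t).edgeSet ⊆ A) :
    yVal G A ≤ yMax (G.induce s) + yMax (G.induce t) + 1 - (G.between s t).edgeSet.ncard := by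
  rw [← glueEdges_restrictEdges hst.codisjoint hA hcut, yVal_glueEdges hst]
  gcongr <;> exact yVal_le_yMax (restrictEdges_subset_edgeSet hA)

theorem yMax_eq_add_of_minimal_edgeCut_card_one_general (hst : IsCompl s t)
    (hcut : (G.between s t).edgeSet.ncard = 1) :
    yMax G = yMax (G.induce s) + yMax (G.induce t) := by
  obtain ⟨e, he⟩ := Set.ncard_eq_one.1 hcut
  have heG : e ∈ G.edgeSet := edgeSet_mono between_le (he ▸ Set.mem_singleton e)
  have hbridge := isBridge_of_edgeSet_between_eq_singleton hst he
  obtain ⟨A, hA, hmax⟩ := exists_yVal_eq_yMax G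
  have hlower := add_yMax_induce_le (G := G) hst
  have hupper := yVal_le_add_yMax_induce hst (Set.insert_subset heG hA)
    (he ▸ Set.singleton_subset_iff.2 (Set.mem_insert e A))
  have hinsert := yVal_le_yVal_insert_of_isBridge heG hbridge A
  omega

end YMax

section TwoComponents

variable {V : Type*} {G : SimpleGraph V}

theorem isCompl_supp_of_forall_eq_or_eq {c₁ c₂ : G.ConnectedComponent} (hne : c₁ ≠ c₂)
    (htwo : ∀ c : G.ConnectedComponent, c = c₁ ∨ c = c₂) : IsCompl c₁.supp c₂.supp :=
  ⟨pairwise_disjoint_supp_connectedComponent G hne,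
    codisjoint_iff.2 (Set.eq_univ_of_forall fun _ ↦ htwo _)⟩

theorem edgeSet_between_supp_subset {A : Set (Sym2 V)}
    {c₁ c₂ : (G.deleteEdges A).ConnectedComponent} (hne : c₁ ≠ c₂) :
    (G.between c₁.supp c₂.supp).edgeSet ⊆ A := by
  intro x hx
  induction x with | _ a b
  obtain ⟨hab, hside⟩ := hx
  by_contra hnot
  have hadj : (G.deleteEdges A).Adj a b := deleteEdges_adj.2 ⟨hab, hnot⟩
  have hdisj := pairwise_disjoint_supp_connectedComponent _ hne
  obtain ⟨ha, hb⟩ | ⟨ha, hb⟩ := hside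
  · exact hdisj.notMem_of_mem_left (c₁.mem_supp_of_adj_mem_supp ha hadj) hb
  · exact hdisj.notMem_of_mem_left hb (c₂.mem_supp_of_adj_mem_supp ha hadj)

theorem edgeSet_between_supp_eq_of_minimal {A : Set (Sym2 V)}
    (hmin : ∀ A' ⊂ A, (G.deleteEdges A').Connected)
    {c₁ c₂ : (G.deleteEdges A).ConnectedComponent} (hne : c₁ ≠ c₂)
    (htwo : ∀ c : (G.deleteEdges A).ConnectedComponent, c = c₁ ∨ c = c₂) :
    (G.between c₁.supp c₂.supp).edgeSet = A := by
  by_contra hA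
  have hconn := hmin _ ((edgeSet_between_supp_subset hne).ssubset_of_ne hA)
  obtain ⟨u, hu⟩ := c₁.nonempty_supp
  obtain ⟨v, hv⟩ := c₂.nonempty_supp
  exact not_reachable_of_between_eq_bot (isCompl_supp_of_forall_eq_or_eq hne htwo)
    (between_deleteEdges_eq_bot subset_rfl) hu hv (hconn u v)

end TwoComponents

/-- If `A` is a minimal edge cut of a connected finite simple graph `G` with `|A| = 1`,
and `G₁`, `G₂` are the two connected components of `G - A`, then
`y_G = y_{G₁} + y_{G₂}`. -/
theorem yMax_eq_add_of_minimal_edgeCut_card_one {V : Type*} [Finite V]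
    (G : SimpleGraph V) (hG : G.Connected)
    (A : Set (Sym2 V)) (hA : A ⊆ G.edgeSet)
    (hdisc : ¬ (G.deleteEdges A).Connected)
    (hmin : ∀ A' ⊂ A, (G.deleteEdges A').Connected)
    (hcard : A.ncard = 1)
    (c₁ c₂ : (G.deleteEdges A).ConnectedComponent) (hne : c₁ ≠ c₂)
    (htwo : ∀ c : (G.deleteEdges A).ConnectedComponent, c = c₁ ∨ c = c₂) :
    yMax G = yMax ((G.deleteEdges A).induce c₁.supp)
      + yMax ((G.deleteEdges A).induce c₂.supp) := by
  have hst := isCompl_supp_of_forall_eq_or_eq hne htwo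
  have hcut := edgeSet_between_supp_eq_of_minimal hmin hne htwo
  rw [yMax_eq_add_of_minimal_edgeCut_card_one_general hst (hcut.symm ▸ hcard),
    ← induce_deleteEdges_edgeSet_between_left (G := G) hst.disjoint,
    ← induce_deleteEdges_edgeSet_between_right (G := G) hst.disjoint, hcut]
end

section
/- Let G be a connected finite simple graph, let A be an edge subset of minimum cardinality among those satisfying y_G(A) = y_G, where y_G ≥ 2, let W ⊆ V(G) be a set of vertices inducing a complete subgraph of G, and let F be a connected component of G − A. If W is not contained in V(F), then |V(F) ∩ W| ≤ 1. -/
open SimpleGraph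

/-!
Restoring to `G - A` two edges of `A` that join the same two components lowers `c(G - A)` by at
most one and `|A|` by exactly two, so it does not lower `y_G`. Hence a minimum-size maximizer `A`
has at most one edge between any two components of `G - A`. But if a clique had two vertices in a
component `F` and a third vertex outside it, the two edges from the third vertex into `F` would both
lie in `A` and join the same two components.
-/

section

variable {V : Type*} {G : SimpleGraph V} {A B : Set (Sym2 V)}

theorem apply_eq_of_reachable {β : Type*} {f : V → β} (hf : ∀ ⦃u v⦄, G.Adj u v → f u = f v)
    {u v : V} (huv : G.Reachable u v) : f u = f v := by
  obtain ⟨p⟩ := huv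
  induction p with
  | nil => rfl
  | cons hadj _ ih => exact (hf hadj).trans ih

theorem numComp_le_add_one_of_adj {H H' : SimpleGraph V} [Finite H'.ConnectedComponent]
    (c d : H.ConnectedComponent)
    (h : ∀ ⦃u v⦄, H'.Adj u v → H.Reachable u v ∨
      s(H.connectedComponentMk u, H.connectedComponentMk v) = s(c, d)) :
    numComp H ≤ numComp H' + 1 := by
  classical
  let merge (v : V) : H.ConnectedComponent :=
    if H.connectedComponentMk v = d then c else H.connectedComponentMk v
  have merge_eq_of_adj : ∀ ⦃u v⦄, H'.Adj u v → merge u = merge v := by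
    intro u v huv
    rcases h huv with hreach | hcd
    · simp only [merge, ConnectedComponent.sound hreach]
    · rcases Sym2.eq_iff.1 hcd with ⟨hu, hv⟩ | ⟨hu, hv⟩ <;> simp [merge, hu, hv]
  let g : H'.ConnectedComponent → H.ConnectedComponent :=
    ConnectedComponent.lift merge fun _ _ p _ => apply_eq_of_reachable merge_eq_of_adj p.reachable
  have surjective_elim :
      Function.Surjective fun o : Option H'.ConnectedComponent => o.elim d g := by
    refine ConnectedComponent.ind fun v => ?_
    by_cases hv : H.connectedComponentMk v = d
    · exact ⟨none, hv.symm⟩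
    · exact ⟨some (H'.connectedComponentMk v), if_neg hv⟩
  simpa only [numComp, Finite.card_option] using Nat.card_le_card_of_surjective _ surjective_elim

theorem numComp_deleteEdges_le_add_one_of_sdiff [Finite (G.deleteEdges B).ConnectedComponent]
    (z : Sym2 (G.deleteEdges A).ConnectedComponent)
    (h : ∀ e ∈ A \ B, e.map (G.deleteEdges A).connectedComponentMk = z) :
    numComp (G.deleteEdges A) ≤ numComp (G.deleteEdges B) + 1 := by
  induction z with
  | _ c d =>
    refine numComp_le_add_one_of_adj c d fun u v huv => ?_
    obtain ⟨hadj, hB⟩ := deleteEdges_adj.1 huv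
    by_cases hA : s(u, v) ∈ A
    · exact .inr (h _ ⟨hA, hB⟩)
    · exact .inl (deleteEdges_adj.2 ⟨hadj, hA⟩).reachable

theorem injOn_map_connectedComponentMk_of_forall_yVal_lt [Finite V]
    (hlt : ∀ B ⊂ A, yVal G B < yVal G A) :
    A.InjOn (Sym2.map (G.deleteEdges A).connectedComponentMk) := by
  intro e he f hf hef
  by_contra hne
  have hpair : {e, f} ⊆ A := Set.pair_subset he hf
  have hcard : (A \ {e, f}).ncard + 2 = A.ncard := by
    rw [← Set.ncard_pair hne, Set.ncard_sdiff_add_ncard_of_subset hpair]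
  have hcomp : numComp (G.deleteEdges A) ≤ numComp (G.deleteEdges (A \ {e, f})) + 1 := by
    refine numComp_deleteEdges_le_add_one_of_sdiff
      (f.map (G.deleteEdges A).connectedComponentMk) fun e' he' => ?_
    rw [Set.sdiff_sdiff_cancel_left hpair] at he'
    rcases he' with rfl | rfl
    exacts [hef, rfl]
  have hy := hlt (A \ {e, f}) (sdiff_lt hpair (Set.insert_nonempty e {f}).ne_empty)
  unfold yVal at hy
  omega

theorem mem_of_adj_of_mem_supp_of_notMem_supp {c : (G.deleteEdges A).ConnectedComponent} {u w : V}
    (hadj : G.Adj u w) (hu : u ∈ c.supp) (hw : w ∉ c.supp) : s(u, w) ∈ A := by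
  by_contra huw
  exact hw (c.mem_supp_of_adj_mem_supp hu (deleteEdges_adj.2 ⟨hadj, huw⟩))

theorem subsingleton_supp_inter_of_isClique
    (hA : A.InjOn (Sym2.map (G.deleteEdges A).connectedComponentMk))
    {W : Set V} (hW : G.IsClique W) {c : (G.deleteEdges A).ConnectedComponent}
    (hns : ¬ W ⊆ c.supp) : (c.supp ∩ W).Subsingleton := by
  obtain ⟨w, hwW, hwc⟩ := Set.not_subset.1 hns
  have mem_A : ∀ u ∈ c.supp ∩ W, s(u, w) ∈ A := fun u hu =>
    mem_of_adj_of_mem_supp_of_notMem_supp (hW hu.2 hwW (ne_of_mem_of_not_mem hu.1 hwc)) hu.1 hwc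
  intro x hx z hz
  refine Sym2.congr_left.1 (hA (mem_A x hx) (mem_A z hz) ?_)
  simp only [Sym2.map_mk, hx.1.trans hz.1.symm]

theorem yVal_le_yMax_s15 [Finite V] (hB : B ⊆ G.edgeSet) : yVal G B ≤ yMax G :=
  le_csSup ((Set.toFinite G.edgeSet.powerset).image (yVal G)).bddAbove ⟨B, hB, rfl⟩

theorem yVal_lt_yVal_of_ssubset [Finite V] (hA : A ⊆ G.edgeSet) (hy : yMax G = yVal G A)
    (hmin : ∀ B ⊆ G.edgeSet, yMax G = yVal G B → A.ncard ≤ B.ncard) (hBA : B ⊂ A) :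
    yVal G B < yVal G A := by
  have hB : B ⊆ G.edgeSet := hBA.subset.trans hA
  refine hy ▸ (yVal_le_yMax_s15 hB).lt_of_ne fun hBmax => ?_
  exact (Set.ncard_lt_ncard hBA).not_ge (hmin B hB hBmax.symm)

theorem supp_inter_clique_card_le_one_general [Finite V] (hlt : ∀ B ⊂ A, yVal G B < yVal G A)
    {W : Set V} (hW : G.IsClique W) {c : (G.deleteEdges A).ConnectedComponent}
    (hns : ¬ W ⊆ c.supp) : (c.supp ∩ W).ncard ≤ 1 :=
  Set.ncard_le_one_iff_subsingleton.2
    (subsingleton_supp_inter_of_isClique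
      (injOn_map_connectedComponentMk_of_forall_yVal_lt hlt) hW hns)

end

/-- If `A` is a smallest edge subset with `y_G(A) = y_G ≥ 2`, `W` induces a complete
subgraph of `G`, and `F` is a component of `G - A` with `W ⊄ V(F)`, then
`|V(F) ∩ W| ≤ 1`. -/
theorem supp_inter_clique_card_le_one {V : Type*} [Finite V]
    (G : SimpleGraph V) (hG : G.Connected)
    (A : Set (Sym2 V)) (hA : A ⊆ G.edgeSet) (hy : yMax G = yVal G A)
    (hmin : ∀ B ⊆ G.edgeSet, yMax G = yVal G B → A.ncard ≤ B.ncard)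
    (h2 : 2 ≤ yMax G)
    (W : Set V) (hW : G.IsClique W)
    (c : (G.deleteEdges A).ConnectedComponent)
    (hns : ¬ W ⊆ c.supp) :
    (c.supp ∩ W).ncard ≤ 1 :=
  supp_inter_clique_card_le_one_general (fun _ => yVal_lt_yVal_of_ssubset hA hy hmin) hW hns
end

section
/- If G is a connected finite simple graph, then x_G = y_G, i.e., the minimum over all spanning trees T of G of the number of connected components of G − E(T) equals the maximum over all edge subsets A ⊆ E(G) of 2·c(G − A) − |A| − 1. -/
open SimpleGraph

/-- `x_G`: the minimum, over all spanning trees `T` of `G`, of the number of connected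
components of `G - E(T)`. -/
noncomputable def xMin {V : Type*} (G : SimpleGraph V) : ℕ :=
  sInf { m : ℕ | ∃ T : SimpleGraph V, T ≤ G ∧ T.IsTree ∧
    numComp (G.deleteEdges T.edgeSet) = m }

/-!
Adding an edge to a graph merges at most two components. For a spanning tree `T`, adding `A ∩ E(T)`
to `G - A` gives a connected graph and adding `A \ E(T)` gives a graph containing `G - E(T)`, so
`c(G - A) ≤ 1 + |A ∩ E(T)|` and `c(G - A) ≤ c(G - E(T)) + |A \ E(T)|`. The sum of the two
inequalities is `y_G(A) ≤ c(G - E(T))`.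

For a pair `(T, A)` attaining equality, let `r(A) = |V| - c(V, A)` be the rank function of the
graphic matroid. A largest forest `I` such that `G - I` is still connected is a largest common
independent set of the graphic matroid and its dual, and matroid intersection provides a certificate
of its maximality, which is an edge set `A`. Any spanning tree `T` of `G - I` then does, since
`I ⊆ E(G) \ E(T)`.
-/

section MatroidRank

variable {E : Type*} {f g : Set E → ℤ}

/-- The rank axioms of a matroid with ground set a finite type `E`. Ranks are integers so that they
can be subtracted; a set `I` is independent when `f I = I.ncard`. The axioms are only meaningful for
finite `E`, because `Set.ncard` vanishes on infinite sets. -/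
structure IsMatroidRank (f : Set E → ℤ) : Prop where
  nonneg : ∀ A, 0 ≤ f A
  le_ncard : ∀ A, f A ≤ A.ncard
  mono : Monotone f
  submodular : ∀ A B, f (A ∪ B) + f (A ∩ B) ≤ f A + f B

namespace IsMatroidRank

theorem map_empty (hf : IsMatroidRank f) : f ∅ = 0 :=
  le_antisymm (by simpa using hf.le_ncard ∅) (hf.nonneg ∅)

theorem map_union_le (hf : IsMatroidRank f) (A B : Set E) : f (A ∪ B) ≤ f A + f B := by
  linarith [hf.submodular A B, hf.nonneg (A ∩ B)]

theorem map_insert_of_map_singleton_ne_one (hf : IsMatroidRank f) {e : E} (he : f {e} ≠ 1)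
    (A : Set E) : f (insert e A) = f A := by
  have map_singleton : f {e} = 0 := by
    have le_one : f {e} ≤ 1 := by simpa using hf.le_ncard {e}
    have := hf.nonneg {e}
    omega
  refine le_antisymm ?_ (hf.mono (Set.subset_insert e A))
  simpa [map_singleton] using hf.map_union_le {e} A

theorem contract (hf : IsMatroidRank f) {e : E} (he : f {e} = 1) :
    IsMatroidRank fun A ↦ f (insert e A) - 1 where
  nonneg A := by
    have : f {e} ≤ f (insert e A) := hf.mono (by simp)
    linarith
  le_ncard A := by
    have : ((insert e A).ncard : ℤ) ≤ A.ncard + 1 := mod_cast Set.ncard_insert_le e A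
    linarith [hf.le_ncard (insert e A)]
  mono A B hAB := sub_le_sub_right (hf.mono (Set.insert_subset_insert hAB)) 1
  submodular A B := by
    have := hf.submodular (insert e A) (insert e B)
    rw [← Set.insert_union_distrib, ← Set.insert_inter_distrib] at this
    linarith

theorem dual [Finite E] (hf : IsMatroidRank f) (S : Set E) :
    IsMatroidRank fun A ↦ A.ncard + f (S \ A) - f S where
  nonneg A := by
    have : f S ≤ f (S \ A ∪ A) := hf.mono (by simp)
    linarith [hf.map_union_le (S \ A) A, hf.le_ncard A]
  le_ncard A := by
    have : f (S \ A) ≤ f S := hf.mono Set.sdiff_subset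
    linarith
  mono A B hAB := by
    have : f (S \ A) ≤ f (S \ B ∪ B \ A) := hf.mono (by grind)
    have : ((B \ A).ncard : ℤ) + A.ncard = B.ncard :=
      mod_cast Set.ncard_sdiff_add_ncard_of_subset hAB
    linarith [hf.map_union_le (S \ B) (B \ A), hf.le_ncard (B \ A)]
  submodular A B := by
    have := hf.submodular (S \ A) (S \ B)
    rw [← Set.sdiff_inter, Set.sdiff_inter_sdiff] at this
    have : ((A ∪ B).ncard : ℤ) + (A ∩ B).ncard = A.ncard + B.ncard :=
      mod_cast Set.ncard_union_add_ncard_inter A B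
    linarith

-- Uncrossing: by submodularity the values at `X = A ∪ insert e B` and `X = A ∩ insert e B` add up
-- to at most `2 * m + 1`, so one of them is at most `m`.
theorem exists_add_sdiff_le_of_contract_le (hf : IsMatroidRank f) (hg : IsMatroidRank g)
    {S A B : Set E} {e : E} (he : e ∉ S) (hA : A ⊆ S) (hB : B ⊆ S) {m : ℤ}
    (hAm : f A + g (S \ A) ≤ m) (hBm : f (insert e B) + g (insert e (S \ B)) ≤ m + 1) :
    ∃ X ⊆ insert e S, f X + g (insert e S \ X) ≤ m := by
  have sdiff_union : insert e S \ (A ∪ insert e B) = S \ A ∩ insert e (S \ B) := by grind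
  have sdiff_inter : insert e S \ (A ∩ insert e B) = S \ A ∪ insert e (S \ B) := by grind
  have hf_sub := hf.submodular A (insert e B)
  have hg_sub := hg.submodular (S \ A) (insert e (S \ B))
  rcases le_or_gt (f (A ∪ insert e B) + g (insert e S \ (A ∪ insert e B))) m with h | h
  · exact ⟨A ∪ insert e B, by grind, h⟩
  · refine ⟨A ∩ insert e B, by grind, ?_⟩
    rw [sdiff_union] at h
    rw [sdiff_inter]
    linarith

/-- The hard direction of Edmonds' matroid intersection theorem. -/
theorem exists_common_indep [Finite E] (hf : IsMatroidRank f) (hg : IsMatroidRank g) (S : Set E) :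
    ∃ I ⊆ S, ∃ X ⊆ S, f I = I.ncard ∧ g I = I.ncard ∧ f X + g (S \ X) ≤ I.ncard := by
  induction S, S.toFinite using Set.Finite.induction_on generalizing f g with
  | empty => exact ⟨∅, subset_rfl, ∅, subset_rfl, by simp [hf.map_empty, hg.map_empty]⟩
  | @insert e S he _ ih =>
    obtain ⟨I, hIS, A, hAS, hfI, hgI, hA⟩ := ih hf hg
    have hIeS := hIS.trans (Set.subset_insert e S)
    by_cases hfe : f {e} = 1; swap
    · refine ⟨I, hIeS, insert e A, Set.insert_subset_insert hAS, hfI, hgI, ?_⟩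
      rwa [hf.map_insert_of_map_singleton_ne_one hfe,
        Set.insert_sdiff_of_mem _ (Set.mem_insert e A), Set.sdiff_insert_of_notMem he]
    by_cases hge : g {e} = 1; swap
    · refine ⟨I, hIeS, A, hAS.trans (Set.subset_insert e S), hfI, hgI, ?_⟩
      rwa [Set.insert_sdiff_of_notMem _ fun heA ↦ he (hAS heA),
        hg.map_insert_of_map_singleton_ne_one hge]
    obtain ⟨J, hJS, B, hBS, hfJ, hgJ, hB⟩ := ih (hf.contract hfe) (hg.contract hge)
    have hJcard : ((insert e J).ncard : ℤ) = J.ncard + 1 :=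
      mod_cast Set.ncard_insert_of_notMem fun heJ ↦ he (hJS heJ)
    obtain ⟨X, hXS, hX⟩ := hf.exists_add_sdiff_le_of_contract_le hg he hAS hBS
      (m := max I.ncard (insert e J).ncard) (by grind) (by grind)
    rcases le_max_iff.1 hX with hX | hX
    · exact ⟨I, hIeS, X, hXS, hfI, hgI, hX⟩
    · exact ⟨insert e J, Set.insert_subset_insert hJS, X, hXS, by linarith, by linarith, hX⟩

theorem exists_indep_map_sdiff_eq [Finite E] (hf : IsMatroidRank f) (S : Set E) :
    ∃ I ⊆ S, ∃ A ⊆ S, f I = I.ncard ∧ f (S \ I) = f S ∧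
      2 * f (S \ A) + A.ncard ≤ I.ncard + f S := by
  obtain ⟨I, hIS, X, hXS, hfI, hdual, hX⟩ := hf.exists_common_indep (hf.dual S) S
  refine ⟨I, hIS, S \ X, Set.sdiff_subset, hfI, by linarith, ?_⟩
  rw [Set.sdiff_sdiff_cancel_left hXS] at hX ⊢
  linarith

end IsMatroidRank

end MatroidRank

section NumComp

variable {V : Type*} {G H : SimpleGraph V}

theorem numComp_eq_one_iff : numComp G = 1 ↔ G.Connected := by
  rw [numComp, Nat.card_eq_one_iff_unique]
  constructor
  · rintro ⟨_, ⟨component⟩⟩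
    have : Nonempty V := ⟨component.out⟩
    exact ⟨fun u v ↦ ConnectedComponent.exact (Subsingleton.elim _ _)⟩
  · intro hG
    have := hG.nonempty
    exact ⟨hG.preconnected.subsingleton_connectedComponent, inferInstance⟩

/-- The real functions on the vertices which are constant on every connected component of `G`,
described by their equal values at adjacent vertices. They turn unions of graphs into intersections
of subspaces, so that numbers of components can be compared through dimensions. -/
def constOnComponents (G : SimpleGraph V) : Submodule ℝ (V → ℝ) where
  carrier := {f | ∀ u v, G.Adj u v → f u = f v}
  add_mem' hf hg u v h := congrArg₂ (· + ·) (hf u v h) (hg u v h)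
  zero_mem' _ _ _ := rfl
  smul_mem' c _ hf u v h := congrArg (c • ·) (hf u v h)

theorem constOnComponents_anti :
    Antitone (constOnComponents : SimpleGraph V → Submodule ℝ (V → ℝ)) :=
  fun _ _ hle _ hf u v h ↦ hf u v (hle h)

theorem constOnComponents_sup (G H : SimpleGraph V) :
    constOnComponents (G ⊔ H) = constOnComponents G ⊓ constOnComponents H :=
  le_antisymm (le_inf (constOnComponents_anti le_sup_left) (constOnComponents_anti le_sup_right))
    fun _ hf u v h ↦ h.elim (hf.1 u v) (hf.2 u v)

variable [Finite V]

theorem numComp_eq_finrank (G : SimpleGraph V) :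
    numComp G = Module.finrank ℝ (constOnComponents G) := by
  classical
  have := Fintype.ofFinite V
  have ker_lapMatrix : (G.lapMatrix ℝ).toLin'.ker = constOnComponents G :=
    Submodule.ext fun f ↦ by
      rw [LinearMap.mem_ker, Matrix.toLin'_apply, lapMatrix_mulVec_eq_zero_iff_forall_adj]
      rfl
  rw [numComp, Nat.card_eq_fintype_card,
    G.card_connectedComponent_eq_finrank_ker_toLin'_lapMatrix, ker_lapMatrix]

theorem numComp_anti : Antitone (numComp : SimpleGraph V → ℕ) :=
  fun _ _ hle ↦ ConnectedComponent.card_le_card_of_le hle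

theorem numComp_le_card (G : SimpleGraph V) : numComp G ≤ Nat.card V :=
  Nat.card_le_card_of_surjective _ Quot.mk_surjective

theorem numComp_add_le_numComp_sup_add_inf (G H : SimpleGraph V) :
    numComp G + numComp H ≤ numComp (G ⊔ H) + numComp (G ⊓ H) := by
  simp only [numComp_eq_finrank]
  have sup_le_inf : constOnComponents G ⊔ constOnComponents H ≤ constOnComponents (G ⊓ H) :=
    sup_le (constOnComponents_anti inf_le_left) (constOnComponents_anti inf_le_right)
  calc
    _ = Module.finrank ℝ ↥(constOnComponents G ⊔ constOnComponents H) +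
        Module.finrank ℝ ↥(constOnComponents G ⊓ constOnComponents H) :=
      (Submodule.finrank_sup_add_finrank_inf_eq _ _).symm
    _ ≤ _ := by
      rw [constOnComponents_sup, add_comm]
      gcongr
      exact Submodule.finrank_mono sup_le_inf

theorem card_le_numComp_edge_add_one (u v : V) : Nat.card V ≤ numComp (edge u v) + 1 := by
  have := Fintype.ofFinite V
  let diff : (V → ℝ) →ₗ[ℝ] ℝ := LinearMap.proj (R := ℝ) (φ := fun _ ↦ ℝ) u - LinearMap.proj v
  have ker_le : diff.ker ≤ constOnComponents (edge u v) := by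
    intro f hf a b hab
    have hfuv : f u = f v := sub_eq_zero.1 hf
    grind
  have finrank_ker_le := Submodule.finrank_mono ker_le
  have finrank_range_le := diff.range.finrank_le
  have rank_nullity := diff.finrank_range_add_finrank_ker
  rw [Module.finrank_self] at finrank_range_le
  rw [Module.finrank_fintype_fun_eq_card, ← Nat.card_eq_fintype_card] at rank_nullity
  rw [numComp_eq_finrank]
  omega

theorem numComp_le_numComp_sup_edge_add_one (G : SimpleGraph V) (u v : V) :
    numComp G ≤ numComp (G ⊔ edge u v) + 1 := by
  have := numComp_add_le_numComp_sup_add_inf G (edge u v)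
  have := card_le_numComp_edge_add_one u v
  have := numComp_le_card (G ⊓ edge u v)
  omega

theorem numComp_le_numComp_sup_fromEdgeSet_add_ncard (G : SimpleGraph V) (B : Set (Sym2 V)) :
    numComp G ≤ numComp (G ⊔ fromEdgeSet B) + B.ncard := by
  induction B, B.toFinite using Set.Finite.induction_on with
  | empty => simp
  | @insert e B he _ ih =>
    induction e with
    | _ u v =>
      have := numComp_le_numComp_sup_edge_add_one (G ⊔ fromEdgeSet B) u v
      rw [edge, sup_assoc, ← fromEdgeSet_union, Set.union_singleton] at this
      rw [Set.ncard_insert_of_notMem he]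
      omega

theorem numComp_le_numComp_add_ncard {B : Set (Sym2 V)} (hB : H.edgeSet \ G.edgeSet ⊆ B) :
    numComp G ≤ numComp H + B.ncard := by
  have hle : H ≤ G ⊔ fromEdgeSet B := by
    rw [← edgeSet_subset_edgeSet, edgeSet_sup, edgeSet_fromEdgeSet]
    have := H.edgeSet_subset_compl_diagSet
    grind
  have := numComp_le_numComp_sup_fromEdgeSet_add_ncard G B
  have := numComp_anti hle
  omega

theorem numComp_bot : numComp (⊥ : SimpleGraph V) = Nat.card V := by
  have := Fintype.ofFinite V
  have : constOnComponents (⊥ : SimpleGraph V) = ⊤ := eq_top_iff.2 fun _ _ _ _ h ↦ h.elim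
  rw [numComp_eq_finrank, this, finrank_top, Module.finrank_fintype_fun_eq_card,
    Nat.card_eq_fintype_card]

end NumComp

section GraphicRank

variable {V : Type*}

/-- The rank function `r(A) = |V| - c(V, A)` of the graphic matroid of the complete graph on `V`.
The diagonal elements of `Sym2 V` are loops of this matroid. -/
noncomputable def graphicRank (A : Set (Sym2 V)) : ℤ :=
  Nat.card V - numComp (fromEdgeSet A)

theorem graphicRank_edgeSet (G : SimpleGraph V) :
    graphicRank G.edgeSet = Nat.card V - numComp G := by
  rw [graphicRank, fromEdgeSet_edgeSet]

theorem graphicRank_edgeSet_sdiff (G : SimpleGraph V) (A : Set (Sym2 V)) :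
    graphicRank (G.edgeSet \ A) = Nat.card V - numComp (G.deleteEdges A) := by
  rw [← edgeSet_deleteEdges, graphicRank_edgeSet]

variable [Finite V]

theorem isMatroidRank_graphicRank :
    IsMatroidRank (graphicRank : Set (Sym2 V) → ℤ) where
  nonneg A := sub_nonneg.2 (mod_cast numComp_le_card _)
  le_ncard A := by
    have := numComp_le_numComp_sup_fromEdgeSet_add_ncard ⊥ A
    rw [numComp_bot, bot_sup_eq] at this
    rw [graphicRank]
    omega
  mono A B hAB := sub_le_sub_left (mod_cast numComp_anti (fromEdgeSet_mono hAB)) _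
  submodular A B := by
    have := numComp_add_le_numComp_sup_add_inf (fromEdgeSet A) (fromEdgeSet B)
    rw [← fromEdgeSet_union, ← fromEdgeSet_inter] at this
    simp only [graphicRank]
    omega

end GraphicRank

section Duality

variable {V : Type*} [Finite V] {G T : SimpleGraph V}

theorem yVal_le_numComp_deleteEdges_edgeSet (hTG : T ≤ G) (hT : T.Connected) (A : Set (Sym2 V)) :
    yVal G A ≤ numComp (G.deleteEdges T.edgeSet) := by
  have hTG_edge : T.edgeSet ⊆ G.edgeSet := edgeSet_subset_edgeSet.2 hTG
  have reconnect_T : numComp (G.deleteEdges A) ≤ numComp T + (A ∩ T.edgeSet).ncard :=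
    numComp_le_numComp_add_ncard (by rw [edgeSet_deleteEdges]; grind)
  have reconnect_compl : numComp (G.deleteEdges A) ≤
      numComp (G.deleteEdges T.edgeSet) + (A \ T.edgeSet).ncard :=
    numComp_le_numComp_add_ncard (by simp only [edgeSet_deleteEdges]; grind)
  have := Set.ncard_inter_add_ncard_sdiff_eq_ncard A T.edgeSet
  rw [numComp_eq_one_iff.2 hT] at reconnect_T
  rw [yVal]
  omega

theorem exists_isTree_numComp_deleteEdges_le_yVal (hG : G.Connected) :
    ∃ T ≤ G, T.IsTree ∧ ∃ A ⊆ G.edgeSet, (numComp (G.deleteEdges T.edgeSet) : ℤ) ≤ yVal G A := by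
  obtain ⟨I, hIG, A, hAG, hI, hspan, hA⟩ :=
    isMatroidRank_graphicRank.exists_indep_map_sdiff_eq G.edgeSet
  simp only [graphicRank_edgeSet_sdiff, graphicRank_edgeSet, numComp_eq_one_iff.2 hG] at hspan hA
  have hconn : (G.deleteEdges I).Connected := numComp_eq_one_iff.1 (by omega)
  obtain ⟨T, hTI, hT⟩ := hconn.exists_isTree_le
  refine ⟨T, hTI.trans (deleteEdges_le I), hT, A, hAG, ?_⟩
  have hle : fromEdgeSet I ≤ G.deleteEdges T.edgeSet := by
    have hTI_edge : T.edgeSet ⊆ G.edgeSet \ I := by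
      rwa [← edgeSet_deleteEdges, edgeSet_subset_edgeSet]
    rw [fromEdgeSet_le, edgeSet_deleteEdges]
    grind
  have := numComp_anti hle
  rw [graphicRank] at hI
  rw [yVal]
  omega

end Duality

/-- Nebeský's theorem: for a connected finite simple graph `G`, `x_G = y_G`. -/
theorem xMin_eq_yMax {V : Type*} [Finite V] (G : SimpleGraph V) (hG : G.Connected) :
    (xMin G : ℤ) = yMax G := by
  obtain ⟨T, hTG, hT, A, hAG, hle⟩ := exists_isTree_numComp_deleteEdges_le_yVal hG
  have hx : xMin G = numComp (G.deleteEdges T.edgeSet) := by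
    refine IsLeast.csInf_eq ⟨⟨T, hTG, hT, rfl⟩, ?_⟩
    rintro _ ⟨T', hT'G, hT', rfl⟩
    exact_mod_cast hle.trans (yVal_le_numComp_deleteEdges_edgeSet hT'G hT'.connected A)
  have hy : yMax G = yVal G A := by
    refine IsGreatest.csSup_eq ⟨⟨A, hAG, rfl⟩, ?_⟩
    rintro _ ⟨A', -, rfl⟩
    exact (yVal_le_numComp_deleteEdges_edgeSet hTG hT.connected A').trans hle
  rw [hx, hy]
  exact le_antisymm hle (yVal_le_numComp_deleteEdges_edgeSet hTG hT.connected A)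
end

section
/- If G is a connected finite simple graph, then ξ(G) = max_{A ⊆ E(G)} (c(G − A) + b(G − A) − |A| − 1), where ξ(G) is the minimum over all spanning trees T of G of the number of connected components of G − E(T) having an odd number of edges, and b(G − A) is the number of connected components of G − A with odd Betti number. -/
open SimpleGraph

/-- The number of connected components of `H` having an odd number of edges. -/
noncomputable def numOddEdgeComps {V : Type*} (H : SimpleGraph V) : ℕ :=
  {c : H.ConnectedComponent | Odd ((H.induce c.supp).edgeSet.ncard)}.ncard

/-- `ξ(G)`: the minimum, over all spanning trees `T` of `G`, of the number of connected
components of `G - E(T)` having an odd number of edges. -/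
noncomputable def xi {V : Type*} (G : SimpleGraph V) : ℕ :=
  sInf { m : ℕ | ∃ T : SimpleGraph V, T ≤ G ∧ T.IsTree ∧
    numOddEdgeComps (G.deleteEdges T.edgeSet) = m }

/-- `b(H)`: the number of connected components `C` of `H` with odd Betti number
`β(C) = |E(C)| - |V(C)| + 1`. -/
noncomputable def numOddBettiComps {V : Type*} (H : SimpleGraph V) : ℕ :=
  {c : H.ConnectedComponent |
    Odd (((H.induce c.supp).edgeSet.ncard : ℤ) - (c.supp.ncard : ℤ) + 1)}.ncard

/-!
Write `D = E \ A`. For a spanning forest `F`, the parity defining the odd components of `E - F` and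
the one defining the components of `D` with even Betti number differ on `D` by the parity of
`|K| + |E(K) ∩ F|`, which must be odd on many components `K` of `D` because `F` is a forest.
Restoring the edges of `A \ F` changes the number of odd components by at most `|A \ F|`, and this
gives `≥`.

For the converse, allow disconnected graphs and an extra `ZMod 2`-valued vertex weight `w` in all
parities, and induct on the edges. Let `A` be an inclusion-maximal maximizer; all values have the
same parity, so strict inequalities between them gain `2`.

* If `A = ∅`, no edge is a bridge. Delete an edge `e` and add `1` to the weight of one endpoint:
  this does not raise the maximum, and a spanning forest of `E - e` also serves `E`.
* If `A ≠ ∅`, maximality of the value on `A` is a Rado-type condition. It splits `A` into a set `T`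
  that completes every spanning forest of `D` to one of `E`, and a set `A \ T` whose edges are
  matched injectively to incident odd-Betti components of `D`. Adding `1` to the weight of the
  matched endpoints encodes the edges of `A \ T` in `D`; by the maximality of `A` under inclusion,
  which acts on each component of `D` separately, it lowers the maximum by at least `|A \ T|`.
-/

namespace Nebesky

open Finset

section SubmodularPartition

variable {α γ : Type*}

theorem exists_maximal_maximizer {β : Type*} [LinearOrder β] (E : Finset α) (f : Finset α → β) :
    ∃ A ⊆ E, (∀ B ⊆ E, f B ≤ f A) ∧ ∀ B ⊆ E, A ⊂ B → f B < f A := by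
  obtain ⟨M, hM, hMmax⟩ := exists_max_image E.powerset f ⟨∅, empty_mem_powerset E⟩
  obtain ⟨A, -, hA⟩ := (E.powerset.filter (f · = f M)).finite_toSet.exists_le_maximal
    (a := M) (by simpa using hM)
  simp only [coe_filter, mem_powerset, Set.mem_ofPred_eq] at hA hMmax
  obtain ⟨hAE, hAM⟩ := hA.prop
  refine ⟨A, hAE, fun B hB => hAM ▸ hMmax B hB, fun B hB hAB => ?_⟩
  refine lt_of_le_of_ne (hAM ▸ hMmax B hB) fun hBA => ?_
  exact hAB.2 (hA.le_of_ge ⟨hB, hBA.trans hAM⟩ hAB.1)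

theorem card_biUnion_union_add_card_biUnion_inter_le [DecidableEq α] [DecidableEq γ]
    (N : α → Finset γ) (X Y : Finset α) :
    #((X ∪ Y).biUnion N) + #((X ∩ Y).biUnion N) ≤ #(X.biUnion N) + #(Y.biUnion N) := by
  rw [union_biUnion, ← card_union_add_card_inter (X.biUnion N)]
  exact Nat.add_le_add_left (card_le_card <| subset_inter
    (biUnion_subset_biUnion_of_subset_left N inter_subset_left)
    (biUnion_subset_biUnion_of_subset_left N inter_subset_right)) _

theorem exists_greatest_tight [DecidableEq α] {A : Finset α} {f : Finset α → ℤ}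
    (hsub : ∀ X Y, f (X ∪ Y) + f (X ∩ Y) ≤ f X + f Y) (hle : ∀ X ⊆ A, (#X : ℤ) ≤ f X)
    {X₀ : Finset α} (hX₀ : X₀ ⊆ A) (htight : (#X₀ : ℤ) = f X₀) :
    ∃ W ⊆ A, (#W : ℤ) = f W ∧ ∀ X ⊆ A, (#X : ℤ) = f X → X ⊆ W := by
  obtain ⟨W, -, hW⟩ := (A.powerset.filter fun X => (#X : ℤ) = f X).finite_toSet.exists_le_maximal
    (a := X₀) (by simpa using ⟨hX₀, htight⟩)
  simp only [coe_filter, mem_powerset, Set.mem_ofPred_eq] at hW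
  obtain ⟨hWA, hWtight⟩ := hW.prop
  refine ⟨W, hWA, hWtight, fun X hX hXtight => ?_⟩
  have hunion : (#(W ∪ X) : ℤ) = f (W ∪ X) := by
    have := hle _ (union_subset hWA hX)
    have := hle (W ∩ X) (inter_subset_left.trans hWA)
    have := hsub W X
    have := card_union_add_card_inter W X
    omega
  exact subset_union_right.trans (hW.le_of_ge ⟨union_subset hWA hX, hunion⟩ subset_union_left)

/-- If both alternatives failed, the greatest tight set `W` would satisfy `r (insert a W) = r W` and
`N a ⊆ N(W)`, so that `insert a W` would violate the hypothesis. -/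
theorem forall_card_add_one_le_or_exists_erase [DecidableEq α] [DecidableEq γ]
    {N : α → Finset γ} {r : Finset α → ℤ} {A : Finset α} {a : α}
    (ha : a ∉ A) (hmono : Monotone r) (hsub : ∀ X Y, r (X ∪ Y) + r (X ∩ Y) ≤ r X + r Y)
    (hle : ∀ X ⊆ insert a A, (#X : ℤ) ≤ r X + #(X.biUnion N)) :
    (∀ X ⊆ A, (#X : ℤ) + 1 ≤ r (insert a X) + #(X.biUnion N)) ∨
      ∃ c ∈ N a, ∀ X ⊆ A, (#X : ℤ) ≤ r X + #(X.biUnion fun e => (N e).erase c) := by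
  by_contra! ⟨⟨X₀, hX₀, hlt₀⟩, hlt⟩
  have hleA : ∀ X ⊆ A, (#X : ℤ) ≤ r X + #(X.biUnion N) :=
    fun X hX => hle X (hX.trans (subset_insert a A))
  have hr₀ := hmono (subset_insert a X₀)
  have hle₀ := hleA X₀ hX₀
  obtain ⟨W, hWA, hWtight, hWmax⟩ := exists_greatest_tight
    (f := fun X => r X + #(X.biUnion N)) (fun X Y => by
      have := hsub X Y
      have := card_biUnion_union_add_card_biUnion_inter_le N X Y
      omega) hleA hX₀ (by omega)
  have hX₀W : X₀ ⊆ W := hWmax X₀ hX₀ (by omega)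
  have haW : a ∉ W := fun h => ha (hWA h)
  have hrW : r (insert a W) ≤ r W := by
    have := hsub W (insert a X₀)
    rw [union_insert, union_eq_left.2 hX₀W, inter_insert_of_notMem haW,
      inter_eq_right.2 hX₀W] at this
    omega
  have hNW : N a ⊆ W.biUnion N := fun c hc => by
    obtain ⟨X, hX, hltX⟩ := hlt c hc
    have := hleA X hX
    rw [← erase_biUnion] at hltX
    have := pred_card_le_card_erase (s := X.biUnion N) (a := c)
    have hcX : c ∈ X.biUnion N := by
      by_contra hcX
      rw [erase_eq_of_notMem hcX] at hltX
      omega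
    exact biUnion_subset_biUnion_of_subset_left N (hWmax X hX (by omega)) hcX
  have hfinal := hle _ (insert_subset_insert a hWA)
  rw [biUnion_insert, union_eq_right.2 hNW, card_insert_of_notMem haW] at hfinal
  push_cast at hfinal
  omega

theorem exists_injOn_insert_of_erase [DecidableEq α] [DecidableEq γ]
    {N : α → Finset γ} {g : α → γ} {B : Finset α} {a : α} {c : γ}
    (ha : a ∉ B) (hc : c ∈ N a) (hg : ∀ e ∈ B, g e ∈ (N e).erase c) (hinj : Set.InjOn g B) :
    ∃ g' : α → γ, (∀ e ∈ insert a B, g' e ∈ N e) ∧ Set.InjOn g' (insert a B : Finset α) := by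
  have hne : ∀ e ∈ B, e ≠ a := fun e he h => ha (h ▸ he)
  have hupdate : Set.EqOn (Function.update g a c) g B :=
    fun e he => Function.update_of_ne (hne e he) c g
  refine ⟨Function.update g a c,
    (forall_mem_insert _ _ _).2 ⟨by simpa using hc, fun e he => ?_⟩, ?_⟩
  · rw [hupdate he]
    exact mem_of_mem_erase (hg e he)
  · rw [coe_insert, Set.injOn_insert (by simpa using ha), hupdate.injOn_iff, Function.update_self]
    refine ⟨hinj, ?_⟩
    rintro ⟨e, he, hec⟩
    rw [hupdate he] at hec
    exact notMem_erase c (N e) (hec ▸ hg e he)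

theorem exists_subset_le_rank_and_injOn_sdiff [DecidableEq α] [DecidableEq γ] [Nonempty γ]
    (A : Finset α) :
    ∀ (N : α → Finset γ) (r : Finset α → ℤ), Monotone r →
      (∀ X Y, r (X ∪ Y) + r (X ∩ Y) ≤ r X + r Y) →
      (∀ X ⊆ A, (#X : ℤ) ≤ r X + #(X.biUnion N)) →
      ∃ T ⊆ A, (#T : ℤ) ≤ r T ∧
        ∃ g : α → γ, (∀ e ∈ A \ T, g e ∈ N e) ∧ Set.InjOn g (A \ T : Finset α) := by
  induction A using Finset.induction_on with
  | empty =>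
    intro N r _ _ hle
    exact ⟨∅, Subset.rfl, by simpa using hle ∅, fun _ => Classical.arbitrary γ, by simp⟩
  | insert a A ha ih =>
    intro N r hmono hsub hle
    rcases forall_card_add_one_le_or_exists_erase ha hmono hsub hle with hrank | ⟨c, hc, hmatch⟩
    · obtain ⟨T, hT, hrT, g, hg⟩ := ih N (fun X => r (insert a X) - 1)
        (fun X Y h => by simpa using hmono (insert_subset_insert a h))
        (fun X Y => by
          have := hsub (insert a X) (insert a Y)
          rw [← insert_union_distrib, ← insert_inter_distrib] at this
          omega)
        (fun X hX => by have := hrank X hX; omega)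
      refine ⟨insert a T, insert_subset_insert a hT, ?_, g, ?_⟩
      · rw [card_insert_of_notMem fun h => ha (hT h)]
        push_cast
        omega
      · rwa [insert_sdiff_insert, sdiff_insert_of_notMem ha]
    · obtain ⟨T, hT, hrT, g, hg, hinj⟩ := ih (fun e => (N e).erase c) r hmono hsub hmatch
      have haT : a ∉ T := fun h => ha (hT h)
      refine ⟨T, hT.trans (subset_insert a A), hrT, ?_⟩
      rw [insert_sdiff_of_notMem A haT]
      exact exists_injOn_insert_of_erase (by simp [ha]) hc hg hinj

end SubmodularPartition

section Components

variable {V : Type*} {S S' : Finset (Sym2 V)} {u v x : V} {Y Z : Finset V}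

/-- The graph on `V` whose edges are the members of `S`. Loops in `S` are harmless: they are dropped
by `SimpleGraph.fromEdgeSet`. -/
abbrev edgeGraph (S : Finset (Sym2 V)) : SimpleGraph V :=
  SimpleGraph.fromEdgeSet (S : Set (Sym2 V))

/-- No edge of `S` joins the vertex set `Y` to its complement. -/
def IsEdgeClosed (Y : Finset V) (S : Finset (Sym2 V)) : Prop :=
  ∀ ⦃u v : V⦄, s(u, v) ∈ S → u ∈ Y → v ∈ Y

namespace IsEdgeClosed

theorem mono (hY : IsEdgeClosed Y S') (h : S ⊆ S') : IsEdgeClosed Y S :=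
  fun _ _ he => hY (h he)

theorem mem_iff (hY : IsEdgeClosed Y S) (h : s(u, v) ∈ S) : u ∈ Y ↔ v ∈ Y :=
  ⟨hY h, hY (Sym2.eq_swap ▸ h)⟩

theorem mem_of_mem_edge {e : Sym2 V} (hY : IsEdgeClosed Y S) (he : e ∈ S) (hu : u ∈ e)
    (hv : v ∈ e) (huY : u ∈ Y) : v ∈ Y := by
  rcases eq_or_ne u v with rfl | huv
  · exact huY
  · exact hY ((Sym2.mem_and_mem_iff huv).1 ⟨hu, hv⟩ ▸ he) huY

theorem compl [Fintype V] [DecidableEq V] (hY : IsEdgeClosed Y S) : IsEdgeClosed Yᶜ S :=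
  fun _ _ he hu => mem_compl.2 fun hv => mem_compl.1 hu ((hY.mem_iff he).2 hv)

theorem union [DecidableEq V] (hY : IsEdgeClosed Y S) (hZ : IsEdgeClosed Z S) :
    IsEdgeClosed (Y ∪ Z) S :=
  fun _ _ he hu => mem_union.2 ((mem_union.1 hu).imp (hY he) (hZ he))

theorem insert [DecidableEq V] (hY : IsEdgeClosed Y S) (huv : u ∈ Y ↔ v ∈ Y) :
    IsEdgeClosed Y (insert s(u, v) S) := by
  intro a b hab ha
  rcases mem_insert.1 hab with hab | hab
  · rcases Sym2.eq_iff.1 hab with ⟨rfl, rfl⟩ | ⟨rfl, rfl⟩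
    · exact huv.1 ha
    · exact huv.2 ha
  · exact hY hab ha

theorem mem_of_reachable (hY : IsEdgeClosed Y S) (h : (edgeGraph S).Reachable u v) (hu : u ∈ Y) :
    v ∈ Y := by
  obtain ⟨walk⟩ := h
  induction walk with
  | nil => exact hu
  | cons hadj _ ih => exact ih (hY ((fromEdgeSet_adj _).1 hadj).1 hu)

end IsEdgeClosed

variable [Fintype V] [DecidableEq V]

open Classical in
/-- The partition of the vertex set into the connected components of the graph with edge set `S`. -/
noncomputable def components (S : Finset (Sym2 V)) : Finpartition (univ : Finset V) :=
  Finpartition.ofSetoid (edgeGraph S).reachableSetoid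

/-- The vertex set of the connected component of `v` in the graph with edge set `S`. -/
noncomputable abbrev component (S : Finset (Sym2 V)) (v : V) : Finset V :=
  (components S).part v

theorem mem_component_iff_reachable : x ∈ component S v ↔ (edgeGraph S).Reachable v x := by
  classical exact Finpartition.mem_part_ofSetoid_iff_rel

theorem mem_component_self (S : Finset (Sym2 V)) (v : V) : v ∈ component S v :=
  (components S).mem_part_self.2 (mem_univ v)

theorem component_mem_parts (S : Finset (Sym2 V)) (v : V) :
    component S v ∈ (components S).parts :=
  (components S).part_mem.2 (mem_univ v)

theorem mem_component_iff : x ∈ component S v ↔ component S x = component S v :=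
  (components S).mem_part_iff_part_eq_part (mem_univ x) (mem_univ v)

theorem mem_parts_components {K : Finset V} :
    K ∈ (components S).parts ↔ ∃ v, component S v = K := by
  refine ⟨fun hK => ?_, fun ⟨v, hv⟩ => hv ▸ component_mem_parts S v⟩
  obtain ⟨v, -, hv⟩ := (components S).part_surjOn hK
  exact ⟨v, hv⟩

theorem isEdgeClosed_component (S : Finset (Sym2 V)) (v : V) :
    IsEdgeClosed (component S v) S := by
  intro a b hab ha
  rcases eq_or_ne a b with rfl | hne
  · exact ha
  · rw [mem_component_iff_reachable] at ha ⊢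
    exact ha.trans (Adj.reachable ((fromEdgeSet_adj _).2 ⟨hab, hne⟩))

theorem component_eq_of_mem_edge {e : Sym2 V} (he : e ∈ S) (hu : u ∈ e) (hv : v ∈ e) :
    component S u = component S v :=
  (mem_component_iff.1 ((isEdgeClosed_component S u).mem_of_mem_edge he hu hv
    (mem_component_self S u))).symm

theorem component_subset_of_isEdgeClosed (hY : IsEdgeClosed Y S) (hx : x ∈ Y) :
    component S x ⊆ Y :=
  fun _ hy => hY.mem_of_reachable (mem_component_iff_reachable.1 hy) hx

theorem component_mono (h : S ⊆ S') (x : V) : component S x ⊆ component S' x :=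
  component_subset_of_isEdgeClosed ((isEdgeClosed_component S' x).mono h) (mem_component_self S' x)

theorem component_eq_of_subset (h : S ⊆ S') (huv : component S u = component S v) :
    component S' u = component S' v :=
  mem_component_iff.1 (component_mono h v (mem_component_iff.2 huv))

theorem components_eq_of_component_eq (h : ∀ x, component S x = component S' x) :
    components S = components S' := by
  ext K
  simp only [mem_parts_components, h]

theorem component_insert (h : u ∈ component S x ↔ v ∈ component S x) :
    component (insert s(u, v) S) x = component S x :=
  (component_subset_of_isEdgeClosed ((isEdgeClosed_component S x).insert h)
    (mem_component_self S x)).antisymm (component_mono (subset_insert _ S) x)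

theorem components_insert_of_component_eq (h : component S u = component S v) :
    components (insert s(u, v) S) = components S :=
  components_eq_of_component_eq fun x => component_insert <| by
    rw [mem_component_iff, mem_component_iff, h]

theorem component_insert_left (S : Finset (Sym2 V)) (u v : V) :
    component (insert s(u, v) S) u = component S u ∪ component S v := by
  have hsub := component_mono (subset_insert s(u, v) S)
  refine Subset.antisymm ?_ (union_subset (hsub u) ?_)
  · refine component_subset_of_isEdgeClosed
      (((isEdgeClosed_component S u).union (isEdgeClosed_component S v)).insert ?_)
      (mem_union_left _ (mem_component_self S u))
    simp
  · rw [component_eq_of_mem_edge (mem_insert_self s(u, v) S) (Sym2.mem_mk_left u v)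
      (Sym2.mem_mk_right u v)]
    exact hsub v

theorem parts_components_insert (S : Finset (Sym2 V)) (u v : V) :
    (components (insert s(u, v) S)).parts = insert (component S u ∪ component S v)
      (((components S).parts.erase (component S u)).erase (component S v)) := by
  have hout : ∀ x, component S x ≠ component S u → component S x ≠ component S v →
      component (insert s(u, v) S) x = component S x := fun x hu hv =>
    component_insert (iff_of_false (fun h => hu (mem_component_iff.1 h).symm)
      fun h => hv (mem_component_iff.1 h).symm)
  ext K
  simp only [mem_insert, mem_erase, mem_parts_components]
  constructor
  · rintro ⟨x, rfl⟩
    by_cases hx : x ∈ component S u ∪ component S v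
    · rw [← component_insert_left] at hx ⊢
      exact Or.inl (mem_component_iff.1 hx)
    · simp only [mem_union, mem_component_iff, not_or] at hx
      rw [hout x hx.1 hx.2]
      exact Or.inr ⟨hx.2, hx.1, x, rfl⟩
  · rintro (rfl | ⟨hv, hu, x, rfl⟩)
    · exact ⟨u, component_insert_left S u v⟩
    · exact ⟨x, hout x hu hv⟩

theorem sum_parts_components_insert {M : Type*} [AddCommGroup M] (g : Finset V → M)
    (h : component S u ≠ component S v) :
    ∑ K ∈ (components (insert s(u, v) S)).parts, g K =
      ∑ K ∈ (components S).parts, g K + g (component S u ∪ component S v)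
        - g (component S u) - g (component S v) := by
  have hnot : component S u ∪ component S v ∉
      ((components S).parts.erase (component S u)).erase (component S v) := fun hK => by
    simp only [mem_erase] at hK
    exact hK.2.1 ((components S).part_eq_of_mem hK.2.2
      (mem_union_left _ (mem_component_self S u))).symm
  have hv : component S v ∈ (components S).parts.erase (component S u) :=
    mem_erase.2 ⟨h.symm, component_mem_parts S v⟩
  rw [parts_components_insert, sum_insert hnot, sum_erase_eq_sub hv,
    sum_erase_eq_sub (component_mem_parts S u)]
  abel

theorem component_empty (v : V) : component (∅ : Finset (Sym2 V)) v = {v} :=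
  (component_subset_of_isEdgeClosed (fun _ _ h => absurd h (notMem_empty _))
    (mem_singleton_self v)).antisymm (singleton_subset_iff.2 (mem_component_self ∅ v))

theorem parts_components_empty :
    (components (∅ : Finset (Sym2 V))).parts = univ.image singleton := by
  ext K
  simp [mem_parts_components, component_empty]

end Components

section OddComponents

variable {V : Type*}

theorem mk_out (e : Sym2 V) : s(e.out.1, e.out.2) = e := by
  rw [Sym2.mk, e.out_eq]

theorem val_add_one (a : ZMod 2) : ((a + 1).val : ℤ) = 1 - a.val := by
  decide +revert

theorem val_eq_ite (a : ZMod 2) : (a.val : ℤ) = if a = 1 then 1 else 0 := by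
  decide +revert

theorem weight_add_self (p : V → ZMod 2) : p + p = 0 :=
  funext fun v => CharTwo.add_self_eq_zero (p v)

variable [DecidableEq V] {S : Finset (Sym2 V)} {u v : V}

/-- The vertex weight that charges every edge of `S` to one chosen endpoint. Its sum over a
connected component is the parity of the number of edges of that component. -/
noncomputable def edgeWeight (S : Finset (Sym2 V)) : V → ZMod 2 :=
  ∑ e ∈ S, Pi.single e.out.1 1

theorem sum_edgeWeight (S : Finset (Sym2 V)) (K : Finset V) :
    ∑ v ∈ K, edgeWeight S v = #{e ∈ S | e.out.1 ∈ K} := by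
  simp only [edgeWeight, Finset.sum_apply]
  rw [sum_comm]
  simp [Pi.single_apply]

theorem edgeWeight_union {X Y : Finset (Sym2 V)} (h : Disjoint X Y) :
    edgeWeight (X ∪ Y) = edgeWeight X + edgeWeight Y :=
  sum_union h

theorem edgeWeight_insert {e : Sym2 V} (h : e ∉ S) :
    edgeWeight (insert e S) = Pi.single e.out.1 1 + edgeWeight S :=
  sum_insert h

theorem edgeWeight_sdiff_add {A E : Finset (Sym2 V)} (h : A ⊆ E) :
    edgeWeight (E \ A) + edgeWeight A = edgeWeight E := by
  rw [← edgeWeight_union sdiff_disjoint, sdiff_union_of_subset h]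

theorem sum_add_single (p : V → ZMod 2) (v : V) (K : Finset V) :
    ∑ x ∈ K, (p + Pi.single v 1 : V → ZMod 2) x = ∑ x ∈ K, p x + if v ∈ K then 1 else 0 := by
  simp only [Pi.add_apply, sum_add_distrib, Pi.single_apply, sum_ite_eq']

variable [Fintype V]

/-- The connected components of the graph with edge set `S` on which the total weight of `p`
is odd. -/
noncomputable def oddComponents (S : Finset (Sym2 V)) (p : V → ZMod 2) : Finset (Finset V) :=
  {K ∈ (components S).parts | ∑ v ∈ K, p v = 1}

theorem card_oddComponents (S : Finset (Sym2 V)) (p : V → ZMod 2) :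
    (#(oddComponents S p) : ℤ) = ∑ K ∈ (components S).parts, ((∑ v ∈ K, p v).val : ℤ) := by
  simp only [oddComponents, val_eq_ite, sum_boole]

theorem sum_component_union (p : V → ZMod 2) (h : component S u ≠ component S v) :
    ∑ x ∈ component S u ∪ component S v, p x =
      ∑ x ∈ component S u, p x + ∑ x ∈ component S v, p x :=
  sum_union ((components S).disjoint (component_mem_parts S u) (component_mem_parts S v) h)

theorem card_parts_insert_of_ne (h : component S u ≠ component S v) :
    (#(components (insert s(u, v) S)).parts : ℤ) = #(components S).parts - 1 := by
  have := sum_parts_components_insert (fun _ => (1 : ℤ)) h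
  simp only [sum_const, nsmul_one] at this
  omega

theorem card_oddComponents_insert_of_ne (p : V → ZMod 2) (h : component S u ≠ component S v) :
    (#(oddComponents (insert s(u, v) S) p) : ℤ) = #(oddComponents S p)
      + (∑ x ∈ component S u, p x + ∑ x ∈ component S v, p x).val
      - (∑ x ∈ component S u, p x).val - (∑ x ∈ component S v, p x).val := by
  rw [card_oddComponents, card_oddComponents, sum_parts_components_insert _ h,
    sum_component_union p h]

theorem oddComponents_insert_of_eq (p : V → ZMod 2) (h : component S u = component S v) :
    oddComponents (insert s(u, v) S) p = oddComponents S p := by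
  rw [oddComponents, components_insert_of_component_eq h, oddComponents]

theorem card_oddComponents_add_single (S : Finset (Sym2 V)) (p : V → ZMod 2) (v : V) :
    (#(oddComponents S (p + Pi.single v 1)) : ℤ) =
      #(oddComponents S p) + 1 - 2 * (∑ x ∈ component S v, p x).val := by
  simp only [card_oddComponents, sum_add_single]
  rw [← add_sum_erase _ _ (component_mem_parts S v), ← add_sum_erase _ _ (component_mem_parts S v),
    if_pos (mem_component_self S v), val_add_one]
  have hrest : ∀ K ∈ (components S).parts.erase (component S v), v ∉ K := fun K hK hv =>
    (mem_erase.1 hK).1 ((components S).part_eq_of_mem (mem_erase.1 hK).2 hv).symm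
  rw [sum_congr rfl fun K hK =>
    show _ = ((∑ x ∈ K, p x).val : ℤ) by rw [if_neg (hrest K hK), add_zero]]
  ring

theorem antitone_card_parts : Antitone fun S : Finset (Sym2 V) => (#(components S).parts : ℤ) := by
  refine antitone_iff_forall_insert_le.2 fun S e _ => ?_
  rw [← mk_out e]
  by_cases h : component S e.out.1 = component S e.out.2
  · rw [components_insert_of_component_eq h]
  · have := card_parts_insert_of_ne h
    omega

theorem antitone_card_oddComponents (p : V → ZMod 2) :
    Antitone fun S : Finset (Sym2 V) => (#(oddComponents S p) : ℤ) := by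
  refine antitone_iff_forall_insert_le.2 fun S e _ => ?_
  rw [← mk_out e]
  by_cases h : component S e.out.1 = component S e.out.2
  · rw [oddComponents_insert_of_eq p h]
  · have := ZMod.val_add_le (∑ x ∈ component S e.out.1, p x) (∑ x ∈ component S e.out.2, p x)
    rw [card_oddComponents_insert_of_ne p h]
    omega

theorem monotone_card_oddComponents_sub_two_mul_card_parts (p : V → ZMod 2) :
    Monotone fun S : Finset (Sym2 V) =>
      (#(oddComponents S p) : ℤ) - 2 * #(components S).parts := by
  refine monotone_iff_forall_le_insert.2 fun S e _ => ?_
  rw [← mk_out e]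
  by_cases h : component S e.out.1 = component S e.out.2
  · rw [oddComponents_insert_of_eq p h, components_insert_of_component_eq h]
  · have := ZMod.val_lt (∑ x ∈ component S e.out.1, p x)
    have := ZMod.val_lt (∑ x ∈ component S e.out.2, p x)
    rw [card_oddComponents_insert_of_ne p h, card_parts_insert_of_ne h]
    omega

theorem monotone_card_parts_add_card :
    Monotone fun S : Finset (Sym2 V) => (#(components S).parts : ℤ) + #S := by
  refine monotone_iff_forall_le_insert.2 fun S e he => ?_
  rw [card_insert_of_notMem he, ← mk_out e]
  by_cases h : component S e.out.1 = component S e.out.2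
  · rw [components_insert_of_component_eq h]
    omega
  · rw [card_parts_insert_of_ne h]
    omega

theorem monotone_card_parts_union_sub {X Y : Finset (Sym2 V)} (h : X ⊆ Y) :
    Monotone fun Z : Finset (Sym2 V) =>
      (#(components (Y ∪ Z)).parts : ℤ) - #(components (X ∪ Z)).parts := by
  refine monotone_iff_forall_le_insert.2 fun Z e _ => ?_
  have hXY : X ∪ Z ⊆ Y ∪ Z := union_subset_union_left h
  rw [union_insert, union_insert, ← mk_out e]
  by_cases hY : component (Y ∪ Z) e.out.1 = component (Y ∪ Z) e.out.2
  · have := antitone_card_parts (subset_insert s(e.out.1, e.out.2) (X ∪ Z))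
    rw [components_insert_of_component_eq hY]
    dsimp only at this ⊢
    omega
  · rw [card_parts_insert_of_ne hY,
      card_parts_insert_of_ne fun hX => hY (component_eq_of_subset hXY hX)]
    omega

theorem card_parts_add_card_parts_le (X Y : Finset (Sym2 V)) :
    (#(components X).parts : ℤ) + #(components Y).parts ≤
      #(components (X ∪ Y)).parts + #(components (X ∩ Y)).parts := by
  have := monotone_card_parts_union_sub (inter_subset_left (s₁ := X) (s₂ := Y)) (empty_subset Y)
  dsimp only at this
  rw [union_empty, union_empty, union_eq_right.2 (inter_subset_right : X ∩ Y ⊆ Y)] at this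
  omega

theorem card_oddComponents_le_insert (S : Finset (Sym2 V)) (e : Sym2 V) (p : V → ZMod 2) :
    (#(oddComponents S p) : ℤ) ≤
      #(oddComponents (insert e S) (p + Pi.single e.out.1 1)) + 1 := by
  have hmerge : ∀ a b : ZMod 2, (a.val : ℤ) + b.val ≤ (a + 1 + b).val + 1 := by decide
  have hins : #(oddComponents (insert e S) (p + Pi.single e.out.1 1)) =
    #(oddComponents (insert s(e.out.1, e.out.2) S) (p + Pi.single e.out.1 1)) := by rw [mk_out]
  have hsingle := card_oddComponents_add_single S p e.out.1
  rw [hins]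
  by_cases h : component S e.out.1 = component S e.out.2
  · have := ZMod.val_lt (∑ x ∈ component S e.out.1, p x)
    rw [oddComponents_insert_of_eq _ h]
    omega
  · have hnot : e.out.1 ∉ component S e.out.2 := fun hmem => h (mem_component_iff.1 hmem)
    have := hmerge (∑ x ∈ component S e.out.1, p x) (∑ x ∈ component S e.out.2, p x)
    rw [card_oddComponents_insert_of_ne _ h, sum_add_single, sum_add_single, if_neg hnot,
      if_pos (mem_component_self S _), add_zero, val_add_one]
    omega

theorem card_oddComponents_le_union (S X : Finset (Sym2 V)) (p : V → ZMod 2) :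
    (#(oddComponents S p) : ℤ) ≤ #(oddComponents (S ∪ X) (p + edgeWeight X)) + #X := by
  induction X using Finset.induction_on with
  | empty => simp [edgeWeight]
  | insert e X he ih =>
    have := card_oddComponents_le_insert (S ∪ X) e (p + edgeWeight X)
    rw [union_insert, edgeWeight_insert he, card_insert_of_notMem he, add_comm (Pi.single _ _),
      ← add_assoc]
    push_cast
    omega

theorem card_oddComponents_add_le (S : Finset (Sym2 V)) (p q : V → ZMod 2) :
    #(oddComponents S (p + q)) ≤ #(oddComponents S p) + #(oddComponents S q) := by
  zify
  simp only [card_oddComponents, Pi.add_apply, sum_add_distrib]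
  rw [← sum_add_distrib]
  exact sum_le_sum fun K _ => mod_cast ZMod.val_add_le _ _

theorem natCast_card_oddComponents (S : Finset (Sym2 V)) (p : V → ZMod 2) :
    (#(oddComponents S p) : ZMod 2) = ∑ v, p v := by
  have := congrArg (Int.cast : ℤ → ZMod 2) (card_oddComponents S p)
  push_cast [ZMod.natCast_zmod_val] at this
  rw [this]
  exact (sum_biUnion (components S).disjoint).symm.trans (by rw [(components S).biUnion_parts])

theorem card_parts_empty : #(components (∅ : Finset (Sym2 V))).parts = Fintype.card V := by
  rw [parts_components_empty, card_image_of_injective _ singleton_injective, card_univ]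

theorem card_oddComponents_empty_one :
    #(oddComponents (∅ : Finset (Sym2 V)) 1) = Fintype.card V := by
  rw [oddComponents, filter_true_of_mem, card_parts_empty]
  simp [parts_components_empty]

end OddComponents

section WeakDuality

variable {V : Type*} [Fintype V] [DecidableEq V] {E F A B : Finset (Sym2 V)}

/-- The connected components `K` of the graph with edge set `S` whose weighted Betti number
`e(K) + w(K) - |K| + 1` is odd, where `e(K)` is the number of edges of `K` and `w` is an
additional weight on the vertices, which the induction on the number of edges needs;
`w = 0` gives the components of odd Betti number. -/
noncomputable def oddBettiComponents (S : Finset (Sym2 V)) (w : V → ZMod 2) :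
    Finset (Finset V) :=
  {K ∈ (components S).parts | ∑ v ∈ K, (edgeWeight S + w) v = #K}

/-- The quantity `c(E - A) + b(E - A) - |A| - c(E)` of Nebeský's formula, for a possibly
disconnected graph with edge set `E` and with Betti numbers weighted by `w`. -/
noncomputable def nebeskyValue (E : Finset (Sym2 V)) (w : V → ZMod 2) (A : Finset (Sym2 V)) : ℤ :=
  #(components (E \ A)).parts + #(oddBettiComponents (E \ A) w) - #A - #(components E).parts

/-- `F` is the edge set of a spanning forest of the graph with edge set `E` having as many
components as that graph; acyclicity is expressed by counting edges. -/
structure IsSpanningForest (F E : Finset (Sym2 V)) : Prop where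
  subset : F ⊆ E
  card_parts : #(components F).parts = #(components E).parts
  card_add : #F + #(components E).parts = Fintype.card V

theorem oddBettiComponents_subset_parts (S : Finset (Sym2 V)) (w : V → ZMod 2) :
    oddBettiComponents S w ⊆ (components S).parts :=
  filter_subset _ _

theorem oddComponents_eq_parts_sdiff (S : Finset (Sym2 V)) (w : V → ZMod 2) :
    oddComponents S (edgeWeight S + w + 1) = (components S).parts \ oddBettiComponents S w := by
  have hne : ∀ a b : ZMod 2, a + b = 1 ↔ a ≠ b := by decide
  rw [oddComponents, oddBettiComponents, ← filter_not]
  refine filter_congr fun K _ => ?_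
  simp only [Pi.add_apply _ (1 : V → ZMod 2), sum_add_distrib, Pi.one_apply, sum_const, nsmul_one,
    hne, ne_eq]

theorem card_oddBettiComponents_add (S : Finset (Sym2 V)) (w : V → ZMod 2) :
    #(oddBettiComponents S w) + #(oddComponents S (edgeWeight S + w + 1)) =
      #(components S).parts := by
  rw [oddComponents_eq_parts_sdiff, add_comm,
    card_sdiff_add_card_eq_card (oddBettiComponents_subset_parts S w)]

theorem le_card_oddComponents_one_add_edgeWeight {D : Finset (Sym2 V)} (h : F ⊆ D) :
    2 * (#(components D).parts : ℤ) - 2 * #(components F).parts + Fintype.card V - #F ≤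
      #(oddComponents D (1 + edgeWeight F)) := by
  have hmono := monotone_card_oddComponents_sub_two_mul_card_parts (1 + edgeWeight F) h
  have hF := card_oddComponents_le_union ∅ F 1
  rw [empty_union, card_oddComponents_empty_one] at hF
  dsimp only at hmono
  omega

theorem card_parts_sdiff_le (F A : Finset (Sym2 V)) :
    (#(components (F \ A)).parts : ℤ) ≤ #(components F).parts + #(F ∩ A) := by
  have := monotone_card_parts_add_card (sdiff_subset (s := F) (t := A))
  have := card_sdiff_add_card_inter F A
  dsimp only at *
  omega

theorem nebeskyValue_le_card_oddComponents (hF : IsSpanningForest F E) (w : V → ZMod 2)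
    (hA : A ⊆ E) :
    nebeskyValue E w A ≤ #(oddComponents (E \ F) (edgeWeight (E \ F) + w)) := by
  set D := E \ A with hD
  have hEF : E \ F = D \ F ∪ A \ F := by grind
  have hDF : D \ F = D \ (F \ A) := by grind
  have hFD : F \ A ⊆ D := sdiff_subset_sdiff hF.subset Subset.rfl
  have hdisj : Disjoint (D \ F) (A \ F) := sdiff_disjoint.mono sdiff_subset sdiff_subset
  have hdelete : (#(oddComponents D (edgeWeight (D \ F) + w)) : ℤ) ≤
      #(oddComponents (E \ F) (edgeWeight (E \ F) + w)) + #(A \ F) := by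
    have hunion := card_oddComponents_le_union (D \ F) (A \ F) (edgeWeight (D \ F) + w)
    rw [add_right_comm, ← edgeWeight_union hdisj, ← hEF] at hunion
    exact (antitone_card_oddComponents _ sdiff_subset).trans hunion
  have hcancel : edgeWeight (D \ F) + w + (edgeWeight D + w + 1) = 1 + edgeWeight (F \ A) := by
    rw [← edgeWeight_sdiff_add hFD, ← hDF]
    linear_combination weight_add_self (edgeWeight (D \ F)) + weight_add_self w
  have hsplit := card_oddComponents_add_le D (edgeWeight (D \ F) + w) (edgeWeight D + w + 1)
  rw [hcancel] at hsplit
  have hforest := le_card_oddComponents_one_add_edgeWeight hFD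
  have hbetti := card_oddBettiComponents_add D w
  have hparts := card_parts_sdiff_le F A
  have hcardF := card_sdiff_add_card_inter F A
  have hcardA := card_sdiff_add_card_inter A F
  rw [inter_comm] at hcardA
  have := hF.card_parts
  have := hF.card_add
  rw [nebeskyValue, ← hD]
  omega

theorem intCast_nebeskyValue (w : V → ZMod 2) (hA : A ⊆ E) :
    (nebeskyValue E w A : ZMod 2) =
      #E + ∑ v, w v + Fintype.card V + #(components E).parts := by
  have hcard := card_sdiff_add_card_eq_card hA
  have hparity := natCast_card_oddComponents (E \ A) (edgeWeight (E \ A) + w + 1)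
  simp only [Pi.add_apply, sum_add_distrib, sum_edgeWeight, mem_univ, filter_true, Pi.one_apply,
    sum_const, card_univ, nsmul_one] at hparity
  have htwo : (2 : ZMod 2) = 0 := rfl
  rw [nebeskyValue, ← card_oddBettiComponents_add (E \ A) w, ← hcard]
  push_cast
  rw [hparity]
  linear_combination ((#(oddBettiComponents (E \ A) w) : ZMod 2)
    - #A - #(components E).parts) * htwo

theorem add_two_le_of_nebeskyValue_lt {w : V → ZMod 2} (hA : A ⊆ E) (hB : B ⊆ E)
    (h : nebeskyValue E w A < nebeskyValue E w B) :
    nebeskyValue E w A + 2 ≤ nebeskyValue E w B := by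
  have hmod : (nebeskyValue E w A : ZMod 2) = nebeskyValue E w B := by
    rw [intCast_nebeskyValue w hA, intCast_nebeskyValue w hB]
  have := (ZMod.intCast_eq_intCast_iff_dvd_sub _ _ 2).1 hmod
  omega

end WeakDuality

section Locality

variable {V : Type*} {H H' D B : Finset (Sym2 V)} {Y K : Finset V} {w : V → ZMod 2}

theorem edgeWeight_apply [DecidableEq V] (S : Finset (Sym2 V)) (x : V) :
    edgeWeight S x = #{e ∈ S | e.out.1 = x} := by
  simpa using sum_edgeWeight S {x}

/-- The edge sets `H` and `H'` have the same edges inside `Y`, and neither has an edge leaving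
`Y`. -/
structure AgreeOn (Y : Finset V) (H H' : Finset (Sym2 V)) : Prop where
  left : IsEdgeClosed Y H
  right : IsEdgeClosed Y H'
  mem_iff : ∀ e : Sym2 V, e.out.1 ∈ Y → (e ∈ H ↔ e ∈ H')

namespace AgreeOn

theorem symm (h : AgreeOn Y H H') : AgreeOn Y H' H :=
  ⟨h.right, h.left, fun e he => (h.mem_iff e he).symm⟩

variable [DecidableEq V]

theorem edgeWeight_apply_eq (h : AgreeOn Y H H') {x : V} (hx : x ∈ Y) :
    edgeWeight H x = edgeWeight H' x := by
  rw [edgeWeight_apply, edgeWeight_apply]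
  congr 2
  ext e
  simp only [mem_filter, and_congr_left_iff]
  exact fun he => h.mem_iff e (he ▸ hx)

variable [Fintype V]

theorem component_subset (h : AgreeOn Y H H') {x : V} (hx : x ∈ Y) :
    component H x ⊆ component H' x := by
  have hsub := component_subset_of_isEdgeClosed h.right hx
  refine component_subset_of_isEdgeClosed (fun u v huv hu => ?_) (mem_component_self H' x)
  have hout : (s(u, v) : Sym2 V).out.1 ∈ Y := by
    rcases Sym2.mem_iff.1 (Sym2.out_fst_mem s(u, v)) with hout | hout <;> rw [hout]
    · exact hsub hu
    · exact h.left huv (hsub hu)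
  exact isEdgeClosed_component H' x ((h.mem_iff _ hout).1 huv) hu

theorem mem_parts (h : AgreeOn Y H H') (hK : K ∈ (components H).parts) (hKY : K ⊆ Y) :
    K ∈ (components H').parts := by
  obtain ⟨x, rfl⟩ := mem_parts_components.1 hK
  have hx := hKY (mem_component_self H x)
  exact mem_parts_components.2
    ⟨x, (h.symm.component_subset hx).antisymm (h.component_subset hx)⟩

theorem mem_oddBettiComponents (h : AgreeOn Y H H') (hK : K ∈ oddBettiComponents H w)
    (hKY : K ⊆ Y) : K ∈ oddBettiComponents H' w := by
  simp only [oddBettiComponents, mem_filter] at hK ⊢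
  refine ⟨h.mem_parts hK.1 hKY, hK.2 ▸ sum_congr rfl fun x hx => ?_⟩
  rw [Pi.add_apply, Pi.add_apply, h.edgeWeight_apply_eq (hKY hx)]

theorem card_parts_subset_eq (h : AgreeOn Y H H') :
    #{K ∈ (components H).parts | K ⊆ Y} = #{K ∈ (components H').parts | K ⊆ Y} := by
  congr 1
  ext K
  simp only [mem_filter, and_congr_left_iff]
  exact fun hKY => ⟨(h.mem_parts · hKY), (h.symm.mem_parts · hKY)⟩

theorem card_oddBettiComponents_subset_eq (h : AgreeOn Y H H') :
    #{K ∈ oddBettiComponents H w | K ⊆ Y} = #{K ∈ oddBettiComponents H' w | K ⊆ Y} := by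
  congr 1
  ext K
  simp only [mem_filter, and_congr_left_iff]
  exact fun hKY => ⟨(h.mem_oddBettiComponents · hKY), (h.symm.mem_oddBettiComponents · hKY)⟩

end AgreeOn

variable [Fintype V] [DecidableEq V]

theorem card_subset_add_card_subset_compl (hY : IsEdgeClosed Y H) {𝒦 : Finset (Finset V)}
    (h𝒦 : 𝒦 ⊆ (components H).parts) : #{K ∈ 𝒦 | K ⊆ Y} + #{K ∈ 𝒦 | K ⊆ Yᶜ} = #𝒦 := by
  rw [← card_filter_add_card_filter_not (s := 𝒦) (· ⊆ Y)]
  congr 2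
  refine filter_congr fun K hK => ?_
  obtain ⟨x, rfl⟩ := mem_parts_components.1 (h𝒦 hK)
  refine ⟨fun hc hs => ?_, fun hs => component_subset_of_isEdgeClosed hY.compl ?_⟩
  · exact mem_compl.1 (hc (mem_component_self H x)) (hs (mem_component_self H x))
  · exact mem_compl.2 fun hx => hs (component_subset_of_isEdgeClosed hY hx)

theorem nebeskyValue_add_nebeskyValue_empty (hY : IsEdgeClosed Y D) (w : V → ZMod 2)
    (B : Finset (Sym2 V)) :
    nebeskyValue D w B + nebeskyValue D w ∅ =
      nebeskyValue D w {e ∈ B | e.out.1 ∈ Y} + nebeskyValue D w {e ∈ B | e.out.1 ∉ Y} := by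
  have hagree : ∀ {Z X X'}, IsEdgeClosed Z D →
      (∀ e : Sym2 V, e.out.1 ∈ Z → (e ∈ X ↔ e ∈ X')) → AgreeOn Z (D \ X) (D \ X') :=
    fun hZ hX => ⟨hZ.mono sdiff_subset, hZ.mono sdiff_subset, fun e he => by
      simp only [mem_sdiff, hX e he]⟩
  have hin : AgreeOn Y (D \ B) (D \ {e ∈ B | e.out.1 ∈ Y}) := hagree hY (by simp +contextual)
  have hin' : AgreeOn Y (D \ ∅) (D \ {e ∈ B | e.out.1 ∉ Y}) := hagree hY (by simp +contextual)
  have hout : AgreeOn Yᶜ (D \ B) (D \ {e ∈ B | e.out.1 ∉ Y}) :=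
    hagree hY.compl (by simp +contextual)
  have hout' : AgreeOn Yᶜ (D \ ∅) (D \ {e ∈ B | e.out.1 ∈ Y}) :=
    hagree hY.compl (by simp +contextual)
  have hparts := fun X => card_subset_add_card_subset_compl
    (hY.mono (sdiff_subset (s := D) (t := X))) Subset.rfl
  have hbetti := fun X => card_subset_add_card_subset_compl
    (hY.mono (sdiff_subset (s := D) (t := X))) (oddBettiComponents_subset_parts (D \ X) w)
  have hcard := card_filter_add_card_filter_not (s := B) (fun e => e.out.1 ∈ Y)
  simp only [nebeskyValue, ← hparts, ← hbetti, hin.card_parts_subset_eq,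
    hin'.card_parts_subset_eq, hout.card_parts_subset_eq, hout'.card_parts_subset_eq,
    hin.card_oddBettiComponents_subset_eq, hin'.card_oddBettiComponents_subset_eq,
    hout.card_oddBettiComponents_subset_eq, hout'.card_oddBettiComponents_subset_eq,
    ← hcard, card_empty]
  push_cast
  ring

theorem nebeskyValue_add_two_mul_card_image_le
    (hlt : ∀ B ⊆ D, B.Nonempty → nebeskyValue D w B < nebeskyValue D w ∅) (hB : B ⊆ D) :
    nebeskyValue D w B + 2 * #(B.image fun e => component D e.out.1) ≤ nebeskyValue D w ∅ := by
  induction B using Finset.strongInduction with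
  | H B ih =>
  obtain rfl | ⟨e, he⟩ := B.eq_empty_or_nonempty
  · simp
  set Y := component D e.out.1
  have heY : e ∈ ({f ∈ B | f.out.1 ∈ Y} : Finset _) := mem_filter.2 ⟨he, mem_component_self D _⟩
  have hmod := nebeskyValue_add_nebeskyValue_empty (Y := Y) (isEdgeClosed_component D _) w B
  have hin := add_two_le_of_nebeskyValue_lt ((filter_subset _ B).trans hB) (empty_subset D)
    (hlt _ ((filter_subset _ B).trans hB) ⟨e, heY⟩)
  have hout := ih {f ∈ B | f.out.1 ∉ Y} (filter_ssubset.2 ⟨e, he, not_not.2 (mem_filter.1 heY).2⟩)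
    ((filter_subset _ B).trans hB)
  have hcard : #(B.image fun f => component D f.out.1) ≤
      #(({f ∈ B | f.out.1 ∉ Y} : Finset _).image fun f => component D f.out.1) + 1 := by
    refine (card_le_card fun K hK => ?_).trans (card_insert_le Y _)
    obtain ⟨f, hf, rfl⟩ := mem_image.1 hK
    by_cases hfY : f.out.1 ∈ Y
    · exact mem_insert.2 (Or.inl (mem_component_iff.1 hfY))
    · exact mem_insert_of_mem (mem_image_of_mem _ (mem_filter.2 ⟨hf, hfY⟩))
  omega

theorem component_sdiff_mem_oddBettiComponents {x : V}
    (hx : component D x ∈ oddBettiComponents D w)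
    (hB : component D x ∉ B.image fun e => component D e.out.1) :
    component (D \ B) x ∈ oddBettiComponents (D \ B) w := by
  have hagree : AgreeOn (component D x) D (D \ B) :=
    ⟨isEdgeClosed_component D x, (isEdgeClosed_component D x).mono sdiff_subset, fun e he => by
      rw [mem_sdiff, and_iff_left]
      exact fun heB => hB (mem_image.2 ⟨e, heB, mem_component_iff.1 he⟩)⟩
  have hmem := hagree.mem_oddBettiComponents hx Subset.rfl
  have heq : component (D \ B) x = component D x :=
    (components (D \ B)).part_eq_of_mem (oddBettiComponents_subset_parts _ _ hmem)
      (mem_component_self D x)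
  rwa [heq]

theorem card_oddComponents_add_sum_single {ι : Type*} {I : Finset ι} {φ : ι → V}
    (p : V → ZMod 2) (hinj : Set.InjOn (component H ∘ φ) I) :
    (#(oddComponents H (p + ∑ i ∈ I, Pi.single (φ i) 1)) : ℤ) =
      #(oddComponents H p) + #I - 2 * #{i ∈ I | ∑ x ∈ component H (φ i), p x = 1} := by
  classical
  induction I using Finset.induction_on with
  | empty => simp
  | insert j I hj ih =>
    rw [coe_insert, Set.injOn_insert (by simpa using hj)] at hinj
    have hzero : ∑ x ∈ component H (φ j), (∑ i ∈ I, Pi.single (φ i) 1 : V → ZMod 2) x = 0 := by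
      simp only [Finset.sum_apply]
      refine sum_eq_zero fun x hx => sum_eq_zero fun i hi => Pi.single_eq_of_ne ?_ _
      rintro rfl
      exact hinj.2 ⟨i, hi, mem_component_iff.1 hx⟩
    rw [sum_insert hj, add_comm (Pi.single _ _), ← add_assoc, card_oddComponents_add_single,
      ih hinj.1]
    simp only [Pi.add_apply _ (∑ _ ∈ I, _), sum_add_distrib, hzero, add_zero, val_eq_ite]
    rw [filter_insert, card_insert_of_notMem hj]
    split_ifs with hodd
    · rw [card_insert_of_notMem fun h => hj (mem_filter.1 h).1]
      push_cast
      ring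
    · push_cast
      ring

theorem nebeskyValue_add_sum_single_le {ι : Type*} {I : Finset ι} {φ : ι → V}
    (hlt : ∀ B ⊆ D, B.Nonempty → nebeskyValue D w B < nebeskyValue D w ∅)
    (hinj : Set.InjOn (component D ∘ φ) I)
    (hodd : ∀ i ∈ I, component D (φ i) ∈ oddBettiComponents D w) (hB : B ⊆ D) :
    nebeskyValue D (w + ∑ i ∈ I, Pi.single (φ i) 1) B ≤ nebeskyValue D w ∅ - #I := by
  set p := edgeWeight (D \ B) + w + 1 with hp
  have hinj' : Set.InjOn (component (D \ B) ∘ φ) I := fun i hi j hj hij =>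
    hinj hi hj (component_eq_of_subset sdiff_subset hij)
  have htouch : ({i ∈ I | ∑ x ∈ component (D \ B) (φ i), p x = 1} : Finset ι).image
      (component D ∘ φ) ⊆ B.image fun e => component D e.out.1 := by
    simp only [image_subset_iff, mem_filter, Function.comp_apply, and_imp]
    intro i hi hpi
    by_contra hmiss
    have hodd' : component (D \ B) (φ i) ∈ oddComponents (D \ B) p :=
      mem_filter.2 ⟨component_mem_parts _ _, hpi⟩
    rw [oddComponents_eq_parts_sdiff, mem_sdiff] at hodd'
    exact hodd'.2 (component_sdiff_mem_oddBettiComponents (hodd i hi) hmiss)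
  have htoggle := card_oddComponents_add_sum_single p hinj'
  have hbetti := card_oddBettiComponents_add (D \ B) w
  rw [← hp] at hbetti
  have hbetti' := card_oddBettiComponents_add (D \ B) (w + ∑ i ∈ I, Pi.single (φ i) 1)
  rw [← add_assoc, add_right_comm _ _ (1 : V → ZMod 2), ← hp] at hbetti'
  have himage := nebeskyValue_add_two_mul_card_image_le hlt hB
  have hcard := card_le_card htouch
  rw [card_image_of_injOn (hinj.mono (coe_subset.2 (filter_subset _ _)))] at hcard
  rw [nebeskyValue] at himage ⊢
  omega

end Locality

section StrongDuality

variable {V : Type*} [Fintype V] [DecidableEq V] {D E F A B S S' T X : Finset (Sym2 V)}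
  {w : V → ZMod 2} {e : Sym2 V}

theorem card_parts_union_eq (h : S ⊆ S') (hcard : #(components S).parts = #(components S').parts)
    (Z : Finset (Sym2 V)) : #(components (S ∪ Z)).parts = #(components (S' ∪ Z)).parts := by
  have hle := antitone_card_parts (union_subset_union_left h : S ∪ Z ⊆ S' ∪ Z)
  have hge := monotone_card_parts_union_sub h (empty_subset Z)
  simp only [union_empty] at hle hge
  omega

theorem exists_subset_card_parts_union_eq (S A : Finset (Sym2 V)) :
    ∃ X ⊆ A, #(components (S ∪ X)).parts = #(components (S ∪ A)).parts ∧
      #X + #(components (S ∪ A)).parts = #(components S).parts := by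
  induction A using Finset.induction_on with
  | empty => exact ⟨∅, Subset.rfl, by simp⟩
  | insert e A he ih =>
    obtain ⟨X, hX, hparts, hcard⟩ := ih
    have hinsert := card_parts_union_eq (union_subset_union_right hX) hparts {e}
    simp only [union_singleton, ← union_insert] at hinsert
    by_cases heq : component (S ∪ X) e.out.1 = component (S ∪ X) e.out.2
    · have hsame := components_insert_of_component_eq heq
      rw [mk_out, ← union_insert] at hsame
      rw [hsame] at hinsert
      exact ⟨X, hX.trans (subset_insert e A), hinsert, by omega⟩
    · have hmerge := card_parts_insert_of_ne heq
      rw [mk_out, ← union_insert] at hmerge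
      refine ⟨insert e X, insert_subset_insert e hX, hinsert, ?_⟩
      rw [card_insert_of_notMem fun h => he (hX h)]
      omega

theorem exists_superset_card_parts_union_eq (hT : T ⊆ A)
    (hle : (#T : ℤ) ≤ #(components D).parts - #(components (D ∪ T)).parts) :
    ∃ T' ⊆ A, T ⊆ T' ∧ #(components (D ∪ T')).parts = #(components (D ∪ A)).parts ∧
      #T' + #(components (D ∪ A)).parts = #(components D).parts := by
  obtain ⟨X, hX, hparts, hcard⟩ := exists_subset_card_parts_union_eq (D ∪ T) A
  rw [union_assoc D T A, union_eq_right.2 hT] at hparts hcard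
  rw [union_assoc] at hparts
  refine ⟨T ∪ X, union_subset hT hX, subset_union_left, hparts, ?_⟩
  have hupper := card_union_le T X
  have hlower := monotone_card_parts_add_card (subset_union_left : D ⊆ D ∪ (T ∪ X))
  have := card_union_le D (T ∪ X)
  dsimp only at hlower
  omega

theorem IsSpanningForest.union (hF : IsSpanningForest F D) (hDT : D ∪ T ⊆ E)
    (hparts : #(components (D ∪ T)).parts = #(components E).parts)
    (hcard : #T + #(components E).parts = #(components D).parts) :
    IsSpanningForest (F ∪ T) E := by
  have hFT := (card_parts_union_eq hF.subset hF.card_parts T).trans hparts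
  refine ⟨(union_subset_union_left hF.subset).trans hDT, hFT, ?_⟩
  have hupper := card_union_le F T
  have hlower := monotone_card_parts_add_card (empty_subset (F ∪ T))
  have := hF.card_add
  simp only [card_parts_empty, card_empty] at hlower
  omega

/-- Equality in the duality: some spanning forest of `E` has at most as many odd cotree components
as the value of some `A ⊆ E`. -/
def HasTightForest (E : Finset (Sym2 V)) (w : V → ZMod 2) : Prop :=
  ∃ F A, IsSpanningForest F E ∧ A ⊆ E ∧
    (#(oddComponents (E \ F) (edgeWeight (E \ F) + w)) : ℤ) ≤ nebeskyValue E w A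

theorem hasTightForest_empty (w : V → ZMod 2) : HasTightForest ∅ w := by
  refine ⟨∅, ∅, ⟨Subset.rfl, rfl, by simp [card_parts_empty]⟩, Subset.rfl, ?_⟩
  have hodd : oddComponents ∅ (edgeWeight ∅ + w) = oddBettiComponents ∅ w := by
    refine filter_congr fun K hK => ?_
    obtain ⟨v, rfl⟩ := mem_parts_components.1 hK
    rw [component_empty, card_singleton, Nat.cast_one]
  simp [nebeskyValue, hodd]

theorem nebeskyValue_empty_le_singleton (w : V → ZMod 2) (he : e ∈ E)
    (hbridge : component (E.erase e) e.out.1 ≠ component (E.erase e) e.out.2) :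
    nebeskyValue E w ∅ ≤ nebeskyValue E w {e} := by
  have hparts := card_parts_insert_of_ne hbridge
  have hodd := card_oddComponents_le_insert (E.erase e) e (edgeWeight (E.erase e) + w + 1)
  have hweight := edgeWeight_insert (notMem_erase e E)
  rw [insert_erase he] at hodd hweight
  rw [mk_out, insert_erase he] at hparts
  rw [show edgeWeight (E.erase e) + w + 1 + Pi.single e.out.1 1 = edgeWeight E + w + 1 by
    rw [hweight]; ring] at hodd
  have hbetti := card_oddBettiComponents_add E w
  have hbetti' := card_oddBettiComponents_add (E.erase e) w
  rw [nebeskyValue, nebeskyValue, sdiff_empty, sdiff_singleton_eq_erase, card_singleton, card_empty]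
  omega

theorem components_erase_eq (he : e ∈ E)
    (heq : component (E.erase e) e.out.1 = component (E.erase e) e.out.2) :
    components (E.erase e) = components E := by
  rw [← components_insert_of_component_eq heq, mk_out, insert_erase he]

theorem nebeskyValue_erase_le (w : V → ZMod 2) (he : e ∈ E)
    (heq : component (E.erase e) e.out.1 = component (E.erase e) e.out.2) (hB : B ⊆ E.erase e) :
    nebeskyValue (E.erase e) (w + Pi.single e.out.1 1) B ≤ nebeskyValue E w (insert e B) + 2 := by
  have hsdiff : E \ insert e B = E.erase e \ B := by grind
  have heB : e ∉ B := fun h => notMem_erase e E (hB h)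
  set p := edgeWeight (E.erase e \ B) + w + 1 with hp
  have hsingle := card_oddComponents_add_single (E.erase e \ B) p e.out.1
  have hval := ZMod.val_lt (∑ x ∈ component (E.erase e \ B) e.out.1, p x)
  have hbetti := card_oddBettiComponents_add (E.erase e \ B) w
  have hbetti' := card_oddBettiComponents_add (E.erase e \ B) (w + Pi.single e.out.1 1)
  rw [← hp] at hbetti
  rw [← add_assoc, add_right_comm _ _ (1 : V → ZMod 2), ← hp] at hbetti'
  rw [nebeskyValue, nebeskyValue, hsdiff, card_insert_of_notMem heB, components_erase_eq he heq]
  push_cast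
  omega

theorem hasTightForest_of_erase (he : e ∈ E)
    (hlt : ∀ B ⊆ E, B.Nonempty → nebeskyValue E w B < nebeskyValue E w ∅)
    (ih : HasTightForest (E.erase e) (w + Pi.single e.out.1 1)) : HasTightForest E w := by
  have heq : component (E.erase e) e.out.1 = component (E.erase e) e.out.2 := by
    by_contra hbridge
    have := hlt {e} (singleton_subset_iff.2 he) (singleton_nonempty e)
    have := nebeskyValue_empty_le_singleton w he hbridge
    omega
  obtain ⟨F, B, ⟨hF, hparts, hcard⟩, hB, hodd⟩ := ih
  rw [components_erase_eq he heq] at hparts hcard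
  refine ⟨F, ∅, ⟨hF.trans (erase_subset e E), hparts, hcard⟩, empty_subset E, ?_⟩
  have hsdiff : E \ F = insert e (E.erase e \ F) := by grind
  have hweight : edgeWeight (E \ F) + w =
      edgeWeight (E.erase e \ F) + (w + Pi.single e.out.1 1) := by
    rw [hsdiff, edgeWeight_insert (by simp)]
    ring
  have hmono := antitone_card_oddComponents (edgeWeight (E \ F) + w)
    (sdiff_subset_sdiff (erase_subset e E) Subset.rfl : E.erase e \ F ⊆ E \ F)
  have hBE : insert e B ⊆ E := insert_subset he (hB.trans (erase_subset e E))
  have hgap := add_two_le_of_nebeskyValue_lt hBE (empty_subset E)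
    (hlt _ hBE (insert_nonempty e B))
  have hval := nebeskyValue_erase_le w he heq hB
  rw [← hweight] at hodd
  dsimp only at hmono
  omega

theorem nebeskyValue_union (w : V → ZMod 2) (hB : B ⊆ E \ A) :
    nebeskyValue E w (A ∪ B) = nebeskyValue (E \ A) w B - #A
      + #(components (E \ A)).parts - #(components E).parts := by
  have hdisj : Disjoint A B := disjoint_sdiff.mono_right hB
  rw [nebeskyValue, nebeskyValue, _root_.sdiff_sdiff_left, sup_eq_union,
    card_union_of_disjoint hdisj]
  push_cast
  ring

/-- The components of odd weighted Betti number of the graph with edge set `D` that contain an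
endpoint of `e`. -/
noncomputable def incidentOddBettiComponents (D : Finset (Sym2 V)) (w : V → ZMod 2) (e : Sym2 V) :
    Finset (Finset V) :=
  e.toFinset.image (component D) ∩ oddBettiComponents D w

theorem oddBettiComponents_sdiff_subset (D X : Finset (Sym2 V)) (w : V → ZMod 2) :
    oddBettiComponents D w \ X.biUnion (incidentOddBettiComponents D w) ⊆
      oddBettiComponents (D ∪ X) w := by
  intro K hK
  rw [mem_sdiff] at hK
  obtain ⟨hK, hmiss⟩ := hK
  obtain ⟨v, rfl⟩ := mem_parts_components.1 (oddBettiComponents_subset_parts D w hK)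
  have hX : ∀ e ∈ X, ∀ x ∈ e, x ∉ component D v := fun e he x hx hxv =>
    hmiss (mem_biUnion.2 ⟨e, he, mem_inter.2 ⟨mem_image.2
      ⟨x, Sym2.mem_toFinset.2 hx, mem_component_iff.1 hxv⟩, hK⟩⟩)
  refine AgreeOn.mem_oddBettiComponents ⟨isEdgeClosed_component D v, fun a b hab ha => ?_,
    fun e he => ?_⟩ hK Subset.rfl
  · exact (mem_union.1 hab).elim (fun hD => isEdgeClosed_component D v hD ha)
      fun habX => absurd ha (hX _ habX a (Sym2.mem_mk_left a b))
  · rw [mem_union, or_iff_left fun heX => hX e heX _ (Sym2.out_fst_mem e) he]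

theorem card_le_card_parts_sub_add (hA : A ⊆ E)
    (hmax : ∀ B ⊆ E, nebeskyValue E w B ≤ nebeskyValue E w A) (hX : X ⊆ A) :
    (#X : ℤ) ≤ #(components (E \ A)).parts - #(components (E \ A ∪ X)).parts
      + #(X.biUnion (incidentOddBettiComponents (E \ A) w)) := by
  have hsdiff : E \ (A \ X) = E \ A ∪ X := by grind
  have hle := hmax (A \ X) (sdiff_subset.trans hA)
  have hpersist := card_le_card (oddBettiComponents_sdiff_subset (E \ A) X w)
  have hcover := le_card_sdiff (X.biUnion (incidentOddBettiComponents (E \ A) w))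
    (oddBettiComponents (E \ A) w)
  have hcard := card_sdiff_add_card_eq_card hX
  rw [nebeskyValue, nebeskyValue, hsdiff] at hle
  omega

theorem exists_spanning_subset_and_injOn (hA : A ⊆ E)
    (hmax : ∀ B ⊆ E, nebeskyValue E w B ≤ nebeskyValue E w A) :
    ∃ T ⊆ A, #(components (E \ A ∪ T)).parts = #(components E).parts ∧
      #T + #(components E).parts = #(components (E \ A)).parts ∧ ∃ φ : Sym2 V → V,
        (∀ e ∈ A \ T, φ e ∈ e ∧ component (E \ A) (φ e) ∈ oddBettiComponents (E \ A) w) ∧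
        Set.InjOn (component (E \ A) ∘ φ) (A \ T : Finset (Sym2 V)) := by
  set D := E \ A with hD
  obtain ⟨T₀, hT₀, hrank, g, hg, hinj⟩ := exists_subset_le_rank_and_injOn_sdiff A
    (incidentOddBettiComponents D w)
    (fun X => (#(components D).parts : ℤ) - #(components (D ∪ X)).parts)
    (fun X Y h => sub_le_sub_left (antitone_card_parts (union_subset_union_right h)) _)
    (fun X Y => by
      have := card_parts_add_card_parts_le (D ∪ X) (D ∪ Y)
      rw [← union_union_distrib_left, ← union_inter_distrib_left] at this
      omega)
    (fun X hX => card_le_card_parts_sub_add hA hmax hX)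
  obtain ⟨T, hT, hT₀T, hparts, hcard⟩ := exists_superset_card_parts_union_eq hT₀ hrank
  rw [hD, sdiff_union_of_subset hA, ← hD] at hparts hcard
  have hsub : A \ T ⊆ A \ T₀ := sdiff_subset_sdiff Subset.rfl hT₀T
  have hend : ∀ e : Sym2 V, ∃ x ∈ e, e ∈ A \ T → component D x = g e := fun e => by
    by_cases he : e ∈ A \ T
    · obtain ⟨x, hx, hxg⟩ := mem_image.1 (mem_inter.1 (hg e (hsub he))).1
      exact ⟨x, Sym2.mem_toFinset.1 hx, fun _ => hxg⟩
    · exact ⟨e.out.1, Sym2.out_fst_mem e, fun h => absurd h he⟩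
  choose φ hφ hφg using hend
  refine ⟨T, hT, hparts, hcard, φ, fun e he => ⟨hφ e, ?_⟩, ?_⟩
  · rw [hφg e he]
    exact (mem_inter.1 (hg e (hsub he))).2
  · exact (hinj.mono (coe_subset.2 hsub)).congr fun e he => (hφg e he).symm

theorem oddComponents_add_edgeWeight_eq {φ : Sym2 V → V} (p : V → ZMod 2)
    (hφ : ∀ e ∈ X, component S e.out.1 = component S (φ e)) :
    oddComponents S (p + edgeWeight X) = oddComponents S (p + ∑ e ∈ X, Pi.single (φ e) 1) := by
  refine filter_congr fun K hK => ?_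
  obtain ⟨v, rfl⟩ := mem_parts_components.1 hK
  simp only [edgeWeight, Pi.add_apply, sum_add_distrib, Finset.sum_apply]
  rw [sum_comm, sum_comm (t := X)]
  simp only [Pi.single_apply, sum_ite_eq', mem_component_iff]
  rw [sum_congr (s₁ := X) rfl fun e he => by rw [hφ e he]]

theorem nebeskyValue_sdiff_lt (hA : A ⊆ E)
    (hlt : ∀ B ⊆ E, A ⊂ B → nebeskyValue E w B < nebeskyValue E w A) :
    ∀ B ⊆ E \ A, B.Nonempty → nebeskyValue (E \ A) w B < nebeskyValue (E \ A) w ∅ := by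
  intro B hB hne
  have hdisj : Disjoint A B := disjoint_sdiff.mono_right hB
  have hlt' := hlt (A ∪ B) (union_subset hA (hB.trans sdiff_subset))
    (left_lt_sup.2 fun h => hne.ne_empty (disjoint_self.1 (hdisj.mono_left h)))
  have hvalue := nebeskyValue_union w hB
  have hvalue' := nebeskyValue_union w (empty_subset (E \ A))
  rw [union_empty] at hvalue'
  omega

theorem hasTightForest_of_sdiff (hA : A ⊆ E)
    (hmax : ∀ B ⊆ E, nebeskyValue E w B ≤ nebeskyValue E w A)
    (hlt : ∀ B ⊆ E, A ⊂ B → nebeskyValue E w B < nebeskyValue E w A)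
    (ih : ∀ w', HasTightForest (E \ A) w') : HasTightForest E w := by
  obtain ⟨T, hTA, hparts, hcard, φ, hφ, hinj⟩ := exists_spanning_subset_and_injOn hA hmax
  have hvalue := nebeskyValue_union w (empty_subset (E \ A))
  rw [union_empty] at hvalue
  set D := E \ A
  obtain ⟨F, B, hF, hB, hodd⟩ := ih (w + ∑ e ∈ A \ T, Pi.single (φ e) 1)
  have hDT : D ∪ T ⊆ E := union_subset sdiff_subset (hTA.trans hA)
  refine ⟨F ∪ T, A, hF.union hDT hparts hcard, hA, ?_⟩
  have htoggle := nebeskyValue_add_sum_single_le (D := D) (nebeskyValue_sdiff_lt hA hlt) hinj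
    (fun e he => (hφ e he).2) hB
  have hFD := hF.subset
  have hsdiff : E \ (F ∪ T) = D \ F ∪ A \ T := by grind
  have hdisj : Disjoint (D \ F) (A \ T) := sdiff_disjoint.mono sdiff_subset sdiff_subset
  have hmove : ∀ e ∈ A \ T,
      component (E \ (F ∪ T)) e.out.1 = component (E \ (F ∪ T)) (φ e) := fun e he =>
    component_eq_of_mem_edge (hsdiff ▸ mem_union_right _ he) (Sym2.out_fst_mem e) (hφ e he).1
  have hmono := antitone_card_oddComponents
    (edgeWeight (D \ F) + w + ∑ e ∈ A \ T, Pi.single (φ e) 1)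
    (hsdiff ▸ subset_union_left : D \ F ⊆ E \ (F ∪ T))
  have hcardA := card_sdiff_add_card_eq_card hTA
  dsimp only at hmono
  rw [← oddComponents_add_edgeWeight_eq _ hmove, add_right_comm, ← edgeWeight_union hdisj,
    ← hsdiff, add_assoc] at hmono
  omega

theorem hasTightForest (E : Finset (Sym2 V)) (w : V → ZMod 2) : HasTightForest E w := by
  induction E using Finset.strongInduction generalizing w with
  | H E ih =>
  obtain ⟨A, hA, hmax, hlt⟩ := exists_maximal_maximizer E (nebeskyValue E w)
  obtain rfl | hne := A.eq_empty_or_nonempty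
  · obtain rfl | ⟨e, he⟩ := E.eq_empty_or_nonempty
    · exact hasTightForest_empty w
    · exact hasTightForest_of_erase he (fun B hB hne => hlt B hB hne.empty_ssubset)
        (ih _ (erase_ssubset he) _)
  · exact hasTightForest_of_sdiff hA hmax hlt (ih _ (sdiff_ssubset hA hne))

end StrongDuality

section SimpleGraphs

variable {V : Type*} [Fintype V] [DecidableEq V] (H : SimpleGraph V) [DecidableRel H.Adj]

theorem coe_component_edgeFinset (v : V) :
    (component H.edgeFinset v : Set V) = (H.connectedComponentMk v).supp := by
  ext x
  rw [mem_coe, mem_component_iff_reachable, edgeGraph, coe_edgeFinset, fromEdgeSet_edgeSet,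
    ConnectedComponent.mem_supp_iff, ConnectedComponent.eq, reachable_comm]

theorem ncard_setOf_supp (P : Set V → Prop) [DecidablePred fun K : Finset V => P K] :
    {c : H.ConnectedComponent | P c.supp}.ncard =
      #((components H.edgeFinset).parts.filter fun K : Finset V => P K) := by
  rw [← Set.ncard_image_of_injective _ ConnectedComponent.supp_injective,
    ← Set.ncard_coe_finset, ← Set.ncard_image_of_injective _ coe_injective]
  congr 1
  ext K
  simp only [Set.mem_image, Set.mem_ofPred_eq, coe_filter, mem_parts_components]
  constructor
  · rintro ⟨c, hc, rfl⟩
    induction c using ConnectedComponent.ind with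
    | h v =>
      rw [← coe_component_edgeFinset] at hc ⊢
      exact ⟨_, ⟨⟨v, rfl⟩, hc⟩, rfl⟩
  · rintro ⟨_, ⟨⟨v, rfl⟩, hP⟩, rfl⟩
    rw [coe_component_edgeFinset] at hP ⊢
    exact ⟨_, hP, rfl⟩

theorem numComp_eq : numComp H = #(components H.edgeFinset).parts := by
  simpa [numComp, Set.ncard_univ] using ncard_setOf_supp H fun _ => True

theorem natCast_ncard_edgeSet_induce {K : Finset V} (hK : IsEdgeClosed K H.edgeFinset) :
    ((H.induce (K : Set V)).edgeSet.ncard : ZMod 2) = ∑ v ∈ K, edgeWeight H.edgeFinset v := by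
  have hsubset : ∀ e ∈ H.edgeFinset, (e.toFinset ⊆ K ↔ e.out.1 ∈ K) := fun e he => by
    refine ⟨fun h => h (Sym2.mem_toFinset.2 (Sym2.out_fst_mem e)), fun h x hx => ?_⟩
    exact hK.mem_of_mem_edge he (Sym2.out_fst_mem e) (Sym2.mem_toFinset.1 hx) h
  rw [Set.ncard_eq_toFinset_card', ← edgeFinset, ← card_filter_edgeFinset_toFinset_subset,
    filter_congr hsubset, sum_edgeWeight]

theorem numOddEdgeComps_eq :
    numOddEdgeComps H = #(oddComponents H.edgeFinset (edgeWeight H.edgeFinset)) := by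
  classical
  refine (ncard_setOf_supp H fun K => Odd (H.induce K).edgeSet.ncard).trans ?_
  rw [oddComponents]
  refine congrArg card (filter_congr fun K hK => ?_)
  obtain ⟨v, rfl⟩ := mem_parts_components.1 hK
  rw [← ZMod.natCast_eq_one_iff_odd, natCast_ncard_edgeSet_induce H (isEdgeClosed_component _ v)]

theorem numOddBettiComps_eq : numOddBettiComps H = #(oddBettiComponents H.edgeFinset 0) := by
  classical
  have hodd : ∀ a b : ZMod 2, a - b + 1 = 1 ↔ a = b := by decide
  refine (ncard_setOf_supp H fun K =>
    Odd (((H.induce K).edgeSet.ncard : ℤ) - (K.ncard : ℤ) + 1)).trans ?_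
  rw [oddBettiComponents]
  refine congrArg card (filter_congr fun K hK => ?_)
  obtain ⟨v, rfl⟩ := mem_parts_components.1 hK
  rw [← ZMod.intCast_eq_one_iff_odd, Set.ncard_coe_finset, Int.cast_add, Int.cast_sub,
    Int.cast_natCast, Int.cast_natCast, Int.cast_one,
    natCast_ncard_edgeSet_induce H (isEdgeClosed_component _ v), hodd, add_zero]

variable {H}

theorem connected_iff_card_parts_eq_one :
    H.Connected ↔ #(components H.edgeFinset).parts = 1 := by
  rw [← numComp_eq, numComp, Nat.card_eq_one_iff_unique, connected_iff]
  refine and_congr ⟨Preconnected.subsingleton_connectedComponent, fun _ u v => ?_⟩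
    ⟨fun ⟨v⟩ => ⟨H.connectedComponentMk v⟩, fun ⟨c⟩ => c.nonempty_supp.to_type⟩
  exact ConnectedComponent.exact (Subsingleton.elim _ _)

variable {G T : SimpleGraph V} [DecidableRel G.Adj]

theorem isTree_iff_isSpanningForest [DecidableRel T.Adj] (hG : G.Connected) (hTG : T ≤ G) :
    T.IsTree ↔ IsSpanningForest T.edgeFinset G.edgeFinset := by
  have hparts := connected_iff_card_parts_eq_one.1 hG
  have hcard : Nat.card T.edgeSet = #T.edgeFinset := by
    rw [Nat.card_eq_fintype_card, edgeFinset_card]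
  rw [isTree_iff_connected_and_card, connected_iff_card_parts_eq_one, hcard,
    Nat.card_eq_fintype_card]
  refine ⟨fun h => ⟨edgeFinset_mono hTG, h.1.trans hparts.symm, hparts ▸ h.2⟩, fun h => ?_⟩
  exact ⟨h.card_parts.trans hparts, hparts ▸ h.card_add⟩

theorem numOddEdgeComps_deleteEdges (F : Finset (Sym2 V)) :
    numOddEdgeComps (G.deleteEdges F) =
      #(oddComponents (G.edgeFinset \ F) (edgeWeight (G.edgeFinset \ F))) := by
  classical rw [numOddEdgeComps_eq, edgeFinset_deleteEdges]

theorem nebeskyValue_edgeFinset (hG : G.Connected) (A : Finset (Sym2 V)) :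
    nebeskyValue G.edgeFinset 0 A =
      numComp (G.deleteEdges A) + numOddBettiComps (G.deleteEdges A)
        - (A : Set (Sym2 V)).ncard - 1 := by
  classical
  rw [nebeskyValue, numComp_eq, numOddBettiComps_eq, edgeFinset_deleteEdges, Set.ncard_coe_finset,
    connected_iff_card_parts_eq_one.1 hG, Nat.cast_one]

theorem nebeskyValue_le_numOddEdgeComps (hG : G.Connected) (hTG : T ≤ G) (hT : T.IsTree)
    {A : Finset (Sym2 V)} (hA : A ⊆ G.edgeFinset) :
    nebeskyValue G.edgeFinset 0 A ≤ numOddEdgeComps (G.deleteEdges T.edgeSet) := by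
  classical
  have hforest := (isTree_iff_isSpanningForest hG hTG).1 hT
  rw [← coe_edgeFinset T, numOddEdgeComps_deleteEdges]
  simpa using nebeskyValue_le_card_oddComponents hforest 0 hA

theorem exists_isTree_numOddEdgeComps_le (hG : G.Connected) :
    ∃ T ≤ G, T.IsTree ∧ ∃ A ⊆ G.edgeFinset,
      (numOddEdgeComps (G.deleteEdges T.edgeSet) : ℤ) ≤ nebeskyValue G.edgeFinset 0 A := by
  classical
  obtain ⟨F, A, hF, hA, hle⟩ := hasTightForest G.edgeFinset 0
  have hFG := coe_subset.2 hF.subset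
  rw [coe_edgeFinset] at hFG
  have hedges : (edgeGraph F).edgeSet = F := by
    rw [edgeGraph, edgeSet_fromEdgeSet, sdiff_eq_left, ← Set.subset_compl_iff_disjoint_right]
    exact hFG.trans G.edgeSet_subset_compl_diagSet
  have hTG : edgeGraph F ≤ G := edgeSet_subset_edgeSet.1 (hedges ▸ hFG)
  have hT : (edgeGraph F).IsTree := by
    refine (isTree_iff_isSpanningForest hG hTG).2 ?_
    convert hF
    rw [← coe_inj, coe_edgeFinset, hedges]
  refine ⟨edgeGraph F, hTG, hT, A, hA, ?_⟩
  rw [hedges, numOddEdgeComps_deleteEdges]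
  simpa using hle

end SimpleGraphs

end Nebesky

/-- Nebeský's formula: for a connected finite simple graph `G`,
`ξ(G) = max_{A ⊆ E(G)} (c(G - A) + b(G - A) - |A| - 1)`. -/
theorem xi_eq_max {V : Type*} [Finite V] (G : SimpleGraph V) (hG : G.Connected) :
    (xi G : ℤ) = sSup { y : ℤ | ∃ A ⊆ G.edgeSet,
      (numComp (G.deleteEdges A) : ℤ) + (numOddBettiComps (G.deleteEdges A) : ℤ)
        - (A.ncard : ℤ) - 1 = y } := by
  classical
  have := Fintype.ofFinite V
  obtain ⟨T, hTG, hT, A, hA, hle⟩ := Nebesky.exists_isTree_numOddEdgeComps_le hG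
  obtain ⟨T₀, hT₀G, hT₀, hxi⟩ : ∃ T₀ ≤ G, T₀.IsTree ∧
      numOddEdgeComps (G.deleteEdges T₀.edgeSet) = xi G :=
    Nat.sInf_mem (s := {m | ∃ T ≤ G, T.IsTree ∧ numOddEdgeComps (G.deleteEdges T.edgeSet) = m})
      ⟨_, T, hTG, hT, rfl⟩
  have hweak : ∀ B ⊆ G.edgeFinset, Nebesky.nebeskyValue G.edgeFinset 0 B ≤ xi G := fun B hB =>
    hxi ▸ Nebesky.nebeskyValue_le_numOddEdgeComps hG hT₀G hT₀ hB
  have hxi_le : xi G ≤ numOddEdgeComps (G.deleteEdges T.edgeSet) := Nat.sInf_le ⟨T, hTG, hT, rfl⟩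
  have hstrong : (xi G : ℤ) ≤ Nebesky.nebeskyValue G.edgeFinset 0 A :=
    (Nat.cast_le.2 hxi_le).trans hle
  symm
  refine IsGreatest.csSup_eq ⟨⟨A, by simpa [← Finset.coe_subset] using hA, ?_⟩, ?_⟩
  · rw [← Nebesky.nebeskyValue_edgeFinset hG]
    exact (hweak A hA).antisymm hstrong
  · rintro _ ⟨B, hB, rfl⟩
    lift B to Finset (Sym2 V) using Set.toFinite B
    rw [← Nebesky.nebeskyValue_edgeFinset hG]
    exact hweak B (by simpa [← Finset.coe_subset] using hB)
end
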